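/- arXiv:1903.00813 — 5 statements merged into one kernel-verified Lean document; each statement's English description precedes it below -/
import Mathlib

section
/- For all integers d ≥ 1, p ≥ 2, and n ≥ 1, C_{d,p}(n) = (1/n) · ∑ over all tuples of nonnegative integers (t_1, …, t_d) with ∑_{k=1}^{d} t_k(p^k − 1) = n − 1 of [ multinomial(n−1+t_1+⋯+t_d ; n−1, t_1, t_2, …, t_d) · ∏_{k=1}^{d} ( (−1)^{t_k(k+1)} · binom(d,k)^{t_k} ) ], where multinomial(m; m_0,…,m_d) = m!/(m_0!·m_1!⋯m_d!) for m = m_0+⋯+m_d. -/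
/-!
Factoring `y` out of the defining equation gives `y * u(y) = X` with `u = 1 - g` and
`g = ∑ k, a k * X ^ (p ^ (k + 1) - 1)`, so Lagrange inversion expresses the coefficients of `y`
through those of the powers of `u⁻¹`. These are expanded first by the negative binomial series in
`g`, then by the multinomial theorem.

Lagrange inversion is the change of variables `X ↦ f = X * u` in a formal residue: the coefficient
of `X ^ n` in `G` is the residue of `G / X ^ (n + 1)`, hence that of `G(f) * f' / f ^ (n + 1)`,
hence the coefficient of `X ^ n` in `u⁻¹ ^ (n + 1) * G(f) * f'`. For `G` the derivative of `H(y)`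
the factor `G(f) * f'` is the derivative of `H`.
-/

section Substitution

open PowerSeries

theorem pow_dvd_subst_sub_sum_smul_pow {R S τ : Type*} [CommRing R] [CommRing S] [Algebra R S]
    {f : MvPowerSeries τ S} (hf : HasSubst f) (G : R⟦X⟧) (N : ℕ) :
    f ^ N ∣ G.subst f - ∑ i ∈ Finset.range N, coeff i G • f ^ i := by
  refine ⟨(PowerSeries.mk fun i => coeff (i + N) G).subst f, ?_⟩
  have htrunc : (trunc N G : R⟦X⟧).subst f = ∑ i ∈ Finset.range N, coeff i G • f ^ i := by
    simp only [subst_coe hf, Polynomial.aeval_def, eval₂_trunc_eq_sum_range, Algebra.smul_def]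
  rw [sub_eq_iff_eq_add, ← htrunc, ← subst_X (R := R) hf, ← subst_pow hf, subst_X hf,
    ← subst_mul hf, ← subst_add hf, ← eq_X_pow_mul_shift_add_trunc]

variable {R : Type*} [CommRing R]

theorem coeff_subst_eq_sum_range {g : R⟦X⟧} (hg : constantCoeff g = 0) (G : R⟦X⟧) (n : ℕ) :
    coeff n (G.subst g) = ∑ i ∈ Finset.range (n + 1), coeff i G * coeff n (g ^ i) := by
  have hdvd : X ^ (n + 1) ∣ G.subst g - ∑ i ∈ Finset.range (n + 1), coeff i G • g ^ i :=
    (pow_dvd_pow_of_dvd (X_dvd_iff.2 hg) _).trans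
      (pow_dvd_subst_sub_sum_smul_pow (.of_constantCoeff_zero' hg) G _)
  have hcoeff := X_pow_dvd_iff.1 hdvd n n.lt_succ_self
  rw [map_sub, sub_eq_zero] at hcoeff
  simpa only [map_sum, coeff_smul, smul_eq_mul] using hcoeff

theorem subst_eq_X_of_subst_eq_X {f y : R⟦X⟧} (hf : constantCoeff f = 0)
    (hf' : IsUnit (coeff 1 f)) (hy : HasSubst y) (h : f.subst y = (X : R⟦X⟧)) :
    y.subst f = (X : R⟦X⟧) := by
  have hinv := subst_substInvOfIsUnit_left f hf hf'
  have hcomp := subst_comp_subst_apply (.of_constantCoeff_zero' hf) hy (f.substInvOfIsUnit hf')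
  rw [hinv, h, X_subst, subst_X hy] at hcomp
  rwa [hcomp]

theorem coeff_pow_of_mul_one_sub_eq_one {φ g : R⟦X⟧} (h : φ * (1 - g) = 1)
    (hg : constantCoeff g = 0) (m n : ℕ) :
    coeff n (φ ^ (m + 1)) =
      ∑ j ∈ Finset.range (n + 1), ((m + j).choose m : R) * coeff n (g ^ j) := by
  have hs : HasSubst g := .of_constantCoeff_zero' hg
  let F : R⟦X⟧ := PowerSeries.mk fun j => ((m + j).choose m : R)
  have hF : F * (1 - X) ^ (m + 1) = 1 := by
    rw [← invOneSubPow_inv_eq_one_sub_pow]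
    exact (invOneSubPow R (m + 1)).val_inv
  have hFg : F.subst g * (1 - g) ^ (m + 1) = 1 := by
    simpa only [map_mul, map_pow, map_sub, map_one, substAlgHom_X, coe_substAlgHom]
      using congrArg (substAlgHom hs) hF
  have hφ : (1 - g) ^ (m + 1) * φ ^ (m + 1) = 1 := by
    rw [← mul_pow, mul_comm, h, one_pow]
  simp only [← left_inv_eq_right_inv hFg hφ, coeff_subst_eq_sum_range hg, F, coeff_mk]

end Substitution

section LagrangeInversion

open PowerSeries

variable {R : Type*} [CommRing R] [IsAddTorsionFree R]

theorem coeff_pow_mul_derivative (f : R⟦X⟧) (m : ℕ) :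
    coeff m (f ^ m * d⁄dX R f) = coeff (m + 1) (f ^ (m + 1)) := by
  refine nsmul_right_injective m.succ_ne_zero ?_
  have hderiv := coeff_derivative (f ^ (m + 1)) m
  rw [derivative_pow, Nat.add_sub_cancel, mul_assoc, ← nsmul_eq_mul, map_nsmul] at hderiv
  simpa only [nsmul_eq_mul, Nat.cast_succ, mul_comm] using hderiv

variable {u φ : R⟦X⟧}

theorem coeff_pow_mul_derivative_X_mul (h : φ * u = 1) (m : ℕ) :
    coeff m (φ ^ (m + 1) * d⁄dX R (X * u)) = if m = 0 then 1 else 0 := by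
  have hd : d⁄dX R (X * u) = u + X * d⁄dX R u := by
    rw [Derivation.leibniz, derivative_X, smul_eq_mul, smul_eq_mul, mul_one, add_comm]
  rcases m with _ | m
  · have hsplit : φ ^ (0 + 1) * d⁄dX R (X * u) = 1 + X * (φ * d⁄dX R u) := by
      rw [hd]
      linear_combination h
    rw [hsplit, map_add, coeff_zero_X_mul, coeff_zero_one, add_zero, if_pos rfl]
  · have hleibniz : φ * d⁄dX R u + u * d⁄dX R φ = 0 := by
      simpa only [Derivation.leibniz, smul_eq_mul, derivative_one] using congrArg (d⁄dX R) h
    have hsplit : φ ^ (m + 1 + 1) * d⁄dX R (X * u) =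
        φ ^ (m + 1) - X * (φ ^ m * d⁄dX R φ) := by
      rw [hd]
      linear_combination
        (φ ^ (m + 1) - X * φ ^ m * d⁄dX R φ) * h + X * φ ^ (m + 1) * hleibniz
    rw [hsplit, map_sub, coeff_succ_X_mul, coeff_pow_mul_derivative, sub_self,
      if_neg m.succ_ne_zero]

theorem coeff_pow_mul_X_mul_pow_mul_derivative (h : φ * u = 1) {i n : ℕ} (hi : i ≤ n) :
    coeff n (φ ^ (n + 1) * ((X * u) ^ i * d⁄dX R (X * u))) = if i = n then 1 else 0 := by
  obtain ⟨m, rfl⟩ := Nat.exists_eq_add_of_le' hi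
  have hcancel : φ ^ i * u ^ i = 1 := by rw [← mul_pow, h, one_pow]
  have hshift : φ ^ (m + i + 1) * ((X * u) ^ i * d⁄dX R (X * u)) =
      X ^ i * (φ ^ (m + 1) * d⁄dX R (X * u)) := by
    rw [mul_pow, add_right_comm, pow_add]
    linear_combination φ ^ (m + 1) * X ^ i * d⁄dX R (X * u) * hcancel
  simp only [hshift, coeff_X_pow_mul, coeff_pow_mul_derivative_X_mul h, right_eq_add]

theorem coeff_pow_mul_subst_X_mul_mul_derivative (h : φ * u = 1) (G : R⟦X⟧) (n : ℕ) :
    coeff n (φ ^ (n + 1) * (G.subst (X * u) * d⁄dX R (X * u))) = coeff n G := by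
  have hs : HasSubst (X * u) := .of_constantCoeff_zero' (by simp)
  obtain ⟨r, hr⟩ := pow_dvd_subst_sub_sum_smul_pow hs G (n + 1)
  have htail : coeff n (φ ^ (n + 1) * ((X * u) ^ (n + 1) * r * d⁄dX R (X * u))) = 0 := by
    refine X_pow_dvd_iff.1 ?_ n n.lt_succ_self
    rw [mul_pow, mul_assoc, mul_assoc]
    exact (dvd_mul_right _ _).mul_left _
  rw [sub_eq_iff_eq_add.1 hr, add_mul, mul_add, map_add, htail, zero_add, Finset.sum_mul,
    Finset.mul_sum, map_sum]
  calc ∑ i ∈ Finset.range (n + 1),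
        coeff n (φ ^ (n + 1) * (coeff i G • (X * u) ^ i * d⁄dX R (X * u)))
      = ∑ i ∈ Finset.range (n + 1), if i = n then coeff i G else 0 := by
        refine Finset.sum_congr rfl fun i hi => ?_
        rw [smul_mul_assoc, mul_smul_comm, coeff_smul,
          coeff_pow_mul_X_mul_pow_mul_derivative h (Finset.mem_range_succ_iff.1 hi),
          smul_eq_mul, mul_ite, mul_one, mul_zero]
    _ = coeff n G := by simp

theorem lagrange_inversion (h : φ * u = 1) {y : R⟦X⟧} (hy : HasSubst y)
    (huy : y * u.subst y = X) (H : R⟦X⟧) (n : ℕ) :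
    ((n : R) + 1) * coeff (n + 1) (H.subst y) = coeff n (φ ^ (n + 1) * d⁄dX R H) := by
  have hf : constantCoeff (X * u) = 0 := by simp
  have hf' : IsUnit (coeff 1 (X * u)) := by
    rw [coeff_succ_X_mul, coeff_zero_eq_constantCoeff_apply]
    exact (IsUnit.of_mul_eq_one_right φ h).map constantCoeff
  have hs : HasSubst (X * u) := .of_constantCoeff_zero' hf
  have hfy : (X * u).subst y = (X : R⟦X⟧) := by rw [subst_mul hy, subst_X hy, huy]
  have hHyf : PowerSeries.subst (X * u) (H.subst y : R⟦X⟧) = H := by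
    rw [subst_comp_subst_apply hy hs, subst_eq_X_of_subst_eq_X hf hf' hy hfy, X_subst]
  rw [mul_comm, ← coeff_derivative, ← coeff_pow_mul_subst_X_mul_mul_derivative h,
    ← derivative_subst hs, hHyf]

end LagrangeInversion

section WeightedTuples

variable {ι : Type*} [Fintype ι] {q : ι → ℕ}

theorem sum_le_sum_mul_of_pos (hq : ∀ k, 0 < q k) (t : ι → ℕ) : ∑ k, t k ≤ ∑ k, t k * q k :=
  Finset.sum_le_sum fun k _ => Nat.le_mul_of_pos_right _ (hq k)

variable [DecidableEq ι]

/-- The tuples `t` of natural numbers of total weight `∑ k, t k * q k = n`, over which the explicit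
form of Lagrange inversion sums. The entries are bounded by `n` to make this a `Finset`; when all
weights `q k` are positive the bound is automatic. -/
def weightedTuples (q : ι → ℕ) (n : ℕ) : Finset (ι → ℕ) :=
  (Fintype.piFinset fun _ => Finset.range (n + 1)).filter fun t => ∑ k, t k * q k = n

theorem mem_weightedTuples (hq : ∀ k, 0 < q k) {n : ℕ} {t : ι → ℕ} :
    t ∈ weightedTuples q n ↔ ∑ k, t k * q k = n := by
  simp only [weightedTuples, Finset.mem_filter, Fintype.mem_piFinset, Finset.mem_range_succ_iff,
    and_iff_right_iff_imp]
  rintro rfl k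
  exact (Finset.single_le_sum (fun _ _ => Nat.zero_le _) (Finset.mem_univ k)).trans
    (sum_le_sum_mul_of_pos hq t)

theorem sum_range_sum_piAntidiag_filter {M : Type*} [AddCommMonoid M] (hq : ∀ k, 0 < q k) (n : ℕ)
    (F : (ι → ℕ) → M) :
    ∑ j ∈ Finset.range (n + 1),
        ∑ t ∈ (Finset.piAntidiag Finset.univ j).filter (fun t => ∑ k, t k * q k = n), F t =
      ∑ t ∈ weightedTuples q n, F t := by
  have hmaps : ∀ t ∈ weightedTuples q n, ∑ k, t k ∈ Finset.range (n + 1) := fun t ht =>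
    Finset.mem_range_succ_iff.2 <|
      (sum_le_sum_mul_of_pos hq t).trans_eq ((mem_weightedTuples hq).1 ht)
  rw [← Finset.sum_fiberwise_of_maps_to hmaps]
  refine Finset.sum_congr rfl fun j _ => Finset.sum_congr ?_ fun _ _ => rfl
  ext t
  simp [mem_weightedTuples hq, and_comm]

end WeightedTuples

section ExplicitInversion

open PowerSeries

theorem coeff_sum_smul_X_pow_pow {ι R : Type*} [DecidableEq ι] [CommSemiring R] (s : Finset ι)
    (a : ι → R) (q : ι → ℕ) (j n : ℕ) :
    coeff n ((∑ k ∈ s, a k • (X : R⟦X⟧) ^ q k) ^ j) =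
      ∑ t ∈ (s.piAntidiag j).filter (fun t => ∑ k ∈ s, t k * q k = n),
        (Nat.multinomial s t : R) * ∏ k ∈ s, a k ^ t k := by
  have hterm (t : ι → ℕ) :
      (Nat.multinomial s t : R⟦X⟧) * ∏ k ∈ s, (a k • (X : R⟦X⟧) ^ q k) ^ t k =
        ((Nat.multinomial s t : R) * ∏ k ∈ s, a k ^ t k) • X ^ ∑ k ∈ s, t k * q k := by
    simp only [smul_pow, Finset.prod_smul, ← pow_mul, Finset.prod_pow_eq_pow_sum, mul_smul,
      mul_comm (q _), mul_smul_comm, Nat.cast_smul_eq_nsmul, nsmul_eq_mul]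
  rw [Finset.sum_pow_eq_sum_piAntidiag, map_sum, Finset.sum_filter]
  refine Finset.sum_congr rfl fun t _ => ?_
  rw [hterm, coeff_smul, coeff_X_pow, smul_eq_mul, mul_ite, mul_one, mul_zero]
  simp only [eq_comm]

theorem succ_mul_coeff_succ_eq_sum_weightedTuples {ι R : Type*} [Fintype ι] [DecidableEq ι]
    [CommRing R] [IsAddTorsionFree R] (a : ι → R) {q : ι → ℕ} (hq : ∀ k, 0 < q k) {y : R⟦X⟧}
    (hy : HasSubst y) (h : y * (1 - ∑ k, a k • y ^ q k) = X) (n : ℕ) :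
    ((n : R) + 1) * coeff (n + 1) y =
      ∑ t ∈ weightedTuples q n,
        ((n + ∑ k, t k).choose n * Nat.multinomial Finset.univ t : R) * ∏ k, a k ^ t k := by
  set g : R⟦X⟧ := ∑ k, a k • X ^ q k with hg
  have hg0 : constantCoeff g = 0 := by simp [hg, (hq _).ne']
  obtain ⟨φ, hφ⟩ : ∃ φ, φ * (1 - g) = 1 :=
    (isUnit_iff_constantCoeff.2 (by simp [hg0])).exists_left_inv
  have hgy : y * (1 - g).subst y = X := by
    rw [← h, hg, ← coe_substAlgHom hy]
    simp only [map_sub, map_one, map_sum, map_smul, map_pow, substAlgHom_X]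
  have hinv := lagrange_inversion hφ hy hgy X n
  rw [subst_X hy, derivative_X, mul_one, coeff_pow_of_mul_one_sub_eq_one hφ hg0] at hinv
  rw [hinv, ← sum_range_sum_piAntidiag_filter hq]
  refine Finset.sum_congr rfl fun j _ => ?_
  rw [hg, coeff_sum_smul_X_pow_pow, Finset.mul_sum]
  refine Finset.sum_congr rfl fun t ht => ?_
  rw [← (Finset.mem_piAntidiag.1 (Finset.mem_filter.1 ht).1).1, mul_assoc]

theorem choose_mul_multinomial_eq_factorial_div {ι K : Type*} [Field K] [CharZero K] (s : Finset ι)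
    (t : ι → ℕ) (n : ℕ) :
    ((n + ∑ k ∈ s, t k).choose n * Nat.multinomial s t : K) =
      (n + ∑ k ∈ s, t k).factorial / (n.factorial * ∏ k ∈ s, ((t k).factorial : K)) := by
  have hprod : ∏ k ∈ s, ((t k).factorial : K) ≠ 0 :=
    Finset.prod_ne_zero_iff.2 fun k _ => Nat.cast_ne_zero.2 (t k).factorial_ne_zero
  rw [eq_div_iff (mul_ne_zero (Nat.cast_ne_zero.2 n.factorial_ne_zero) hprod),
    ← Nat.add_choose_mul_factorial_mul_factorial, ← Nat.multinomial_spec, Nat.choose_symm_add]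
  push_cast
  ring

end ExplicitInversion

section HypercubePartitions

theorem sum_neg_one_pow_mul_choose_mul_pow_pow {R : Type*} [CommRing R] (d : ℕ) {p : ℕ}
    (hp : 0 < p) (y : R) :
    ∑ k ∈ Finset.range (d + 1), (-1) ^ k * (d.choose k : R) * y ^ p ^ k =
      y * (1 - ∑ k : Fin d,
        (-1) ^ (k.1 + 2) * (d.choose (k.1 + 1) : R) * y ^ (p ^ (k.1 + 1) - 1)) := by
  have hpow (k : ℕ) : y ^ p ^ k = y * y ^ (p ^ k - 1) := by
    rw [← pow_succ', Nat.sub_add_cancel (pow_pos hp k)]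
  rw [Finset.sum_range_succ', ← Fin.sum_univ_eq_sum_range
    fun k => (-1) ^ (k + 1) * (d.choose (k + 1) : R) * y ^ p ^ (k + 1), mul_sub, Finset.mul_sum,
    add_comm, sub_eq_add_neg, ← Finset.sum_neg_distrib]
  congr 1
  · simp
  · refine Finset.sum_congr rfl fun k _ => ?_
    rw [hpow]
    ring

theorem statement_1_general {K : Type*} [Field K] [CharZero K] (d p : ℕ) (hp : 2 ≤ p)
    (y : PowerSeries K)
    (h0 : PowerSeries.constantCoeff y = 0)
    (heq : ∑ k ∈ Finset.range (d + 1),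
        (-1 : PowerSeries K) ^ k * (d.choose k : PowerSeries K) * y ^ p ^ k
        = PowerSeries.X)
    (n : ℕ) (hn : 1 ≤ n) :
    PowerSeries.coeff n y =
      (1 / (n : K)) *
        ∑ t ∈ (Fintype.piFinset fun _ : Fin d => Finset.range n).filter
            (fun t => ∑ k : Fin d, t k * (p ^ (k.1 + 1) - 1) = n - 1),
          ((Nat.factorial (n - 1 + ∑ k : Fin d, t k) : K) /
              ((Nat.factorial (n - 1) : K) * ∏ k : Fin d, (Nat.factorial (t k) : K))) *
            ∏ k : Fin d,
              (-1 : K) ^ (t k * (k.1 + 2)) * (d.choose (k.1 + 1) : K) ^ t k := by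
  obtain ⟨m, rfl⟩ := Nat.exists_eq_add_of_le' hn
  let a (k : Fin d) : K := (-1) ^ (k.1 + 2) * d.choose (k.1 + 1)
  let q (k : Fin d) : ℕ := p ^ (k.1 + 1) - 1
  have hq (k : Fin d) : 0 < q k := Nat.sub_pos_of_lt (Nat.one_lt_pow k.1.succ_ne_zero hp)
  have hX : y * (1 - ∑ k, a k • y ^ q k) = PowerSeries.X := by
    rw [← heq, sum_neg_one_pow_mul_choose_mul_pow_pow d (by lia) y]
    simp [a, q, PowerSeries.smul_eq_C_mul]
  have key := succ_mul_coeff_succ_eq_sum_weightedTuples a hq (.of_constantCoeff_zero' h0) hX m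
  rw [one_div, eq_inv_mul_iff_mul_eq₀ (Nat.cast_ne_zero.2 m.succ_ne_zero), Nat.cast_succ, key]
  refine Finset.sum_congr rfl fun t _ => ?_
  rw [choose_mul_multinomial_eq_factorial_div, Nat.add_sub_cancel]
  simp only [a, mul_pow, ← pow_mul, mul_comm (t _)]

end HypercubePartitions

/-- For all `d ≥ 1`, `p ≥ 2`, `n ≥ 1`,
`C_{d,p}(n) = (1/n) ⬝ ∑_{t_1,…,t_d ≥ 0, ∑ t_k (p^k - 1) = n-1}
  multinomial(n-1+t_1+⋯+t_d; n-1, t_1, …, t_d) ⬝ ∏_k (-1)^{t_k(k+1)} C(d,k)^{t_k}`,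
where `C_{d,p}(n)` is the coefficient of `x^n` in the unique power series `y` with zero constant
term satisfying `∑_{k=0}^{d} (-1)^k C(d,k) y^{p^k} = x`.  Here the index `k : Fin d` corresponds
to the paper's index `k + 1 ∈ {1, …, d}`, and each solution tuple satisfies `t_k ≤ n - 1 < n`,
so summing over `t : Fin d → ℕ` with values in `Finset.range n` loses nothing. -/
theorem statement_1 (d p : ℕ) (hd : 1 ≤ d) (hp : 2 ≤ p)
    (y : PowerSeries ℚ)
    (h0 : PowerSeries.constantCoeff y = 0)
    (heq : ∑ k ∈ Finset.range (d + 1),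
        (-1 : PowerSeries ℚ) ^ k * (d.choose k : PowerSeries ℚ) * y ^ p ^ k
        = PowerSeries.X)
    (n : ℕ) (hn : 1 ≤ n) :
    PowerSeries.coeff n y =
      (1 / (n : ℚ)) *
        ∑ t ∈ (Fintype.piFinset fun _ : Fin d => Finset.range n).filter
            (fun t => ∑ k : Fin d, t k * (p ^ (k.1 + 1) - 1) = n - 1),
          ((Nat.factorial (n - 1 + ∑ k : Fin d, t k) : ℚ) /
              ((Nat.factorial (n - 1) : ℚ) * ∏ k : Fin d, (Nat.factorial (t k) : ℚ))) *
            ∏ k : Fin d,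
              (-1 : ℚ) ^ (t k * (k.1 + 2)) * (d.choose (k.1 + 1) : ℚ) ^ t k :=
  statement_1_general d p hp y h0 heq n hn
end

section
/- For all integers n ≥ 1, C_{2,2}(n) = (1/n) · ∑_{i=0}^{⌊(n−1)/3⌋} multinomial(2(n−1−i); n−1, n−1−3i, i) · (−1)^i · 2^{n−1−3i}, where multinomial(m; a,b,c) = m!/(a!·b!·c!) for m = a+b+c. -/
/-!
If `y * v = X`, the coefficient of `X ^ k` in `v ^ (k + 1) * y'` is the residue of
`y' / y ^ (k + 1)`, hence `1` for `k = 0` and `0` otherwise. Splitting off constant terms,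
`H (y) = H (0) + y * H₁ (y)`, shows by induction on `N` that `H (y) * v ^ (N + 1) * y'` and `H` have
the same `N`-th coefficient, which is Lagrange inversion once `v = ψ (y)`. For
`ψ = 1 - a X - b X ^ r` the powers of `ψ⁻¹` are found by expanding first in `b X ^ r / (1 - a X)`
and then in `a X`.
-/

section

open PowerSeries Finset

variable {R : Type*} [CommRing R]

section LagrangeInversion

variable {y v : R⟦X⟧}

theorem mul_derivative_add_mul_derivative_of_mul_eq_X (h : y * v = X) :
    y * d⁄dX R v + v * d⁄dX R y = 1 := by
  simpa [Derivation.leibniz] using congrArg (d⁄dX R) h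

theorem constantCoeff_mul_derivative_of_mul_eq_X (hy : constantCoeff y = 0) (h : y * v = X) :
    constantCoeff (v * d⁄dX R y) = 1 := by
  simpa [hy] using congrArg constantCoeff (mul_derivative_add_mul_derivative_of_mul_eq_X h)

theorem coeff_succ_pow_mul_derivative_of_mul_eq_X [IsAddTorsionFree R] (h : y * v = X) (k : ℕ) :
    coeff (k + 1) (v ^ (k + 2) * d⁄dX R y) = 0 := by
  have key : (k + 1) • (v ^ (k + 2) * d⁄dX R y)
      = (k + 1) • v ^ (k + 1) - X * d⁄dX R (v ^ (k + 1)) := by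
    rw [derivative_pow, ← h, Nat.add_sub_cancel]
    simp only [nsmul_eq_mul]
    linear_combination
      ((k + 1 : ℕ) : R⟦X⟧) * v ^ (k + 1) * mul_derivative_add_mul_derivative_of_mul_eq_X h
  have smul_coeff : (k + 1) • coeff (k + 1) (v ^ (k + 2) * d⁄dX R y) = 0 := by
    rw [← map_nsmul, key, map_sub, map_nsmul, coeff_succ_X_mul, coeff_derivative, nsmul_eq_mul]
    push_cast
    ring
  exact (nsmul_eq_zero_iff_right k.succ_ne_zero).1 smul_coeff

theorem subst_eq_mul_subst_shift_add_const (hs : HasSubst y) (H : R⟦X⟧) :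
    H.subst y = y * (mk fun p ↦ coeff (p + 1) H).subst y + C (constantCoeff H) := by
  conv_lhs => rw [eq_X_mul_shift_add_const H, subst_add hs, subst_mul hs, subst_X hs, subst_C]
  rfl

theorem coeff_subst_mul_pow_mul_derivative [IsAddTorsionFree R] (hy : constantCoeff y = 0)
    (h : y * v = X) (N : ℕ) (H : R⟦X⟧) :
    coeff N (H.subst y * (v ^ (N + 1) * d⁄dX R y)) = coeff N H := by
  have hs := HasSubst.of_constantCoeff_zero' hy
  induction N generalizing H with
  | zero =>
    rw [subst_eq_mul_subst_shift_add_const hs, coeff_zero_eq_constantCoeff_apply, zero_add,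
      pow_one, map_mul, constantCoeff_mul_derivative_of_mul_eq_X hy h]
    simp [hy]
  | succ N ih =>
    have expand : H.subst y * (v ^ (N + 2) * d⁄dX R y)
        = X * ((mk fun p ↦ coeff (p + 1) H).subst y * (v ^ (N + 1) * d⁄dX R y))
          + C (constantCoeff H) * (v ^ (N + 2) * d⁄dX R y) := by
      rw [subst_eq_mul_subst_shift_add_const hs, ← h]
      ring
    rw [expand, map_add, coeff_succ_X_mul, ih, coeff_C_mul,
      coeff_succ_pow_mul_derivative_of_mul_eq_X h, mul_zero, add_zero, coeff_mk]

theorem lagrange_buermann [IsAddTorsionFree R] {φ ψ : R⟦X⟧} (hφψ : φ * ψ = 1)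
    (hy : constantCoeff y = 0) (h : y * ψ.subst y = X) (H : R⟦X⟧) (N : ℕ) :
    (N + 1) * coeff (N + 1) (H.subst y) = coeff N (d⁄dX R H * φ ^ (N + 1)) := by
  have hs := HasSubst.of_constantCoeff_zero' hy
  have inv_subst : φ.subst y * ψ.subst y = 1 := by
    rw [← subst_mul hs, hφψ, ← coe_substAlgHom hs, map_one]
  have cancel : (d⁄dX R H * φ ^ (N + 1)).subst y * (ψ.subst y ^ (N + 1) * d⁄dX R y)
      = d⁄dX R (H.subst y) := by
    rw [derivative_subst hs, subst_mul hs, subst_pow hs]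
    calc _ = (d⁄dX R H).subst y * (φ.subst y * ψ.subst y) ^ (N + 1) * d⁄dX R y := by ring
      _ = _ := by rw [inv_subst, one_pow, mul_one]
  rw [← coeff_subst_mul_pow_mul_derivative hy h N (d⁄dX R H * φ ^ (N + 1)), cancel,
    coeff_derivative, mul_comm]

end LagrangeInversion

theorem coeff_mul_subst_of_X_pow_dvd {g : R⟦X⟧} {r : ℕ} (hr : 0 < r) (hg : X ^ r ∣ g)
    (w F : R⟦X⟧) (n : ℕ) :
    coeff n (w * F.subst g) = ∑ i ∈ range (n / r + 1), coeff i F * coeff n (w * g ^ i) := by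
  have hs : HasSubst g :=
    HasSubst.of_constantCoeff_zero' (X_dvd_iff.1 ((dvd_pow_self X hr.ne').trans hg))
  obtain ⟨Q, hQ⟩ : ∃ Q : R⟦X⟧, F = X ^ (n / r + 1) * Q + (trunc (n / r + 1) F : R⟦X⟧) :=
    ⟨_, eq_X_pow_mul_shift_add_trunc _ F⟩
  have trunc_subst : (trunc (n / r + 1) F : R⟦X⟧).subst g
      = ∑ i ∈ range (n / r + 1), C (coeff i F) * g ^ i := by
    rw [subst_coe hs, Polynomial.aeval_eq_sum_range' (natDegree_trunc_lt F (n / r))]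
    refine sum_congr rfl fun i hi ↦ ?_
    rw [coeff_trunc, if_pos (mem_range.1 hi), PowerSeries.smul_eq_C_mul]
  have tail : coeff n (w * (g ^ (n / r + 1) * Q.subst g)) = 0 := by
    have hdvd : X ^ (n + 1) ∣ g ^ (n / r + 1) :=
      calc X ^ (n + 1) ∣ (X ^ r) ^ (n / r + 1) :=
            pow_mul (X : R⟦X⟧) r _ ▸ pow_dvd_pow X (Nat.lt_mul_div_succ n hr)
        _ ∣ g ^ (n / r + 1) := pow_dvd_pow_of_dvd hg _
    exact X_pow_dvd_iff.1 ((hdvd.mul_right _).mul_left w) n n.lt_succ_self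
  conv_lhs => rw [hQ]
  rw [subst_add hs, subst_mul hs, subst_pow hs, subst_X hs, trunc_subst, mul_add, map_add,
    tail, zero_add, mul_sum, map_sum]
  refine sum_congr rfl fun i _ ↦ ?_
  rw [mul_left_comm, coeff_C_mul]

theorem invOneSubPow_succ_subst_mul_one_sub_pow {g : R⟦X⟧} (hg : HasSubst g) (d : ℕ) :
    (invOneSubPow R (d + 1) : R⟦X⟧).subst g * (1 - g) ^ (d + 1) = 1 := by
  have h := congrArg (substAlgHom hg) (mk_add_choose_mul_one_sub_pow_eq_one R d)
  rw [← invOneSubPow_val_succ_eq_mk_add_choose] at h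
  simpa only [map_mul, map_pow, map_sub, map_one, substAlgHom_X, coe_substAlgHom] using h

theorem coeff_pow_succ_of_mul_one_sub_C_mul_X {a : R} {u : R⟦X⟧} (hu : u * (1 - C a * X) = 1)
    (d n : ℕ) : coeff n (u ^ (d + 1)) = (d + n).choose d * a ^ n := by
  have hpow : (1 - C a * X) ^ (d + 1) * u ^ (d + 1) = 1 := by
    rw [← mul_pow, mul_comm, hu, one_pow]
  have hres : rescale a (invOneSubPow R (d + 1) : R⟦X⟧) * (1 - C a * X) ^ (d + 1) = 1 := by
    have h := congrArg (rescale a) (mk_add_choose_mul_one_sub_pow_eq_one R d)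
    rw [← invOneSubPow_val_succ_eq_mk_add_choose] at h
    simpa only [map_mul, map_pow, map_sub, map_one, rescale_X] using h
  rw [← left_inv_eq_right_inv hres hpow, coeff_rescale, invOneSubPow_val_succ_eq_mk_add_choose,
    coeff_mk, mul_comm]

theorem coeff_pow_succ_of_mul_one_sub_trinomial {a b : R} {r : ℕ} (hr : 0 < r) {φ : R⟦X⟧}
    (hφ : φ * (1 - C a * X - C b * X ^ r) = 1) (d n : ℕ) :
    coeff n (φ ^ (d + 1)) = ∑ i ∈ range (n / r + 1),
      (d + i).choose d * (d + i + (n - r * i)).choose (d + i) * a ^ (n - r * i) * b ^ i := by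
  obtain ⟨u, hu⟩ : ∃ u : R⟦X⟧, u * (1 - C a * X) = 1 :=
    (isUnit_iff_constantCoeff.2 (by simp)).exists_left_inv
  have hg : X ^ r ∣ C b * X ^ r * u := ⟨C b * u, by ring⟩
  have hs : HasSubst (C b * X ^ r * u) :=
    HasSubst.of_constantCoeff_zero' (X_dvd_iff.1 ((dvd_pow_self X hr.ne').trans hg))
  have factor : 1 - C b * X ^ r * u = u * (1 - C a * X - C b * X ^ r) := by
    linear_combination -hu
  have expansion : φ ^ (d + 1)
      = u ^ (d + 1) * (invOneSubPow R (d + 1) : R⟦X⟧).subst (C b * X ^ r * u) := by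
    refine left_inv_eq_right_inv (a := (1 - C a * X - C b * X ^ r) ^ (d + 1)) ?_ ?_
    · rw [← mul_pow, hφ, one_pow]
    · have h := invOneSubPow_succ_subst_mul_one_sub_pow hs d
      rw [factor, mul_pow] at h
      linear_combination h
  rw [expansion, coeff_mul_subst_of_X_pow_dvd hr hg]
  refine sum_congr rfl fun i hi ↦ ?_
  have hi' : r * i ≤ n := mul_comm i r ▸ (Nat.le_div_iff_mul_le hr).1 (mem_range_succ_iff.1 hi)
  have shift : u ^ (d + 1) * (C b * X ^ r * u) ^ i
      = C (b ^ i) * (X ^ (r * i) * u ^ (d + i + 1)) := by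
    rw [map_pow]
    ring
  rw [shift, coeff_C_mul, coeff_X_pow_mul', if_pos hi', coeff_pow_succ_of_mul_one_sub_C_mul_X hu,
    invOneSubPow_val_succ_eq_mk_add_choose, coeff_mk]
  ring

theorem succ_mul_coeff_succ_of_eq_X_add [IsAddTorsionFree R] {y : R⟦X⟧}
    (hy : constantCoeff y = 0) {a b : R} {r : ℕ} (hr : 0 < r)
    (h : y = X + C a * y ^ 2 + C b * y ^ (r + 1)) (N : ℕ) :
    (N + 1) * coeff (N + 1) y = ∑ i ∈ range (N / r + 1),
      (N + i).choose N * (N + i + (N - r * i)).choose (N + i) * a ^ (N - r * i) * b ^ i := by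
  have hs := HasSubst.of_constantCoeff_zero' hy
  obtain ⟨φ, hφ⟩ : ∃ φ : R⟦X⟧, φ * (1 - C a * X - C b * X ^ r) = 1 :=
    (isUnit_iff_constantCoeff.2 (by simp [hr.ne'])).exists_left_inv
  have hψ : y * (1 - C a * X - C b * X ^ r : R⟦X⟧).subst y = X := by
    have subst_const (c : R) : substAlgHom hs (C c) = C c := (substAlgHom hs).commutes c
    rw [← coe_substAlgHom hs]
    simp only [map_sub, map_mul, map_pow, map_one, substAlgHom_X, subst_const]
    linear_combination h
  have hX := lagrange_buermann hφ hy hψ X N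
  rw [subst_X hs, derivative_X, one_mul] at hX
  rw [hX, coeff_pow_succ_of_mul_one_sub_trinomial hr hφ]

theorem choose_mul_choose_eq_factorial_div {K : Type*} [Field K] [CharZero K] (l m n : ℕ) :
    ((l + m).choose l * (l + m + n).choose (l + m) : K)
      = (l + m + n).factorial / (l.factorial * n.factorial * m.factorial) := by
  rw [Nat.cast_add_choose, Nat.cast_add_choose]
  have := (l + m).factorial_ne_zero
  field_simp

theorem statement_2_general {K : Type*} [Field K] [CharZero K] (y : K⟦X⟧)
    (hy : constantCoeff y = 0) (a b : K) (r : ℕ) (hr : 0 < r)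
    (h : y = X + C a * y ^ 2 + C b * y ^ (r + 1)) (n : ℕ) (hn : 1 ≤ n) :
    coeff n y = 1 / n * ∑ i ∈ range ((n - 1) / r + 1),
      (2 * (n - 1) - (r - 1) * i).factorial /
        ((n - 1).factorial * (n - 1 - r * i).factorial * i.factorial) * b ^ i *
          a ^ (n - 1 - r * i) := by
  obtain ⟨N, rfl⟩ := Nat.exists_eq_add_of_le' hn
  rw [one_div, eq_inv_mul_iff_mul_eq₀ (Nat.cast_ne_zero.2 N.succ_ne_zero), Nat.cast_succ,
    succ_mul_coeff_succ_of_eq_X_add hy hr h, Nat.add_sub_cancel]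
  refine sum_congr rfl fun i hi ↦ ?_
  have hi' : r * i ≤ N := mul_comm i r ▸ (Nat.le_div_iff_mul_le hr).1 (mem_range_succ_iff.1 hi)
  have top : 2 * N - (r - 1) * i = N + i + (N - r * i) := by
    have := Nat.le_mul_of_pos_left i hr
    rw [Nat.sub_one_mul]
    omega
  rw [top, choose_mul_choose_eq_factorial_div, mul_right_comm]

end

/-- For all `n ≥ 1`,
`C_{2,2}(n) = (1/n) ⬝ ∑_{i=0}^{⌊(n-1)/3⌋} multinomial(2(n-1-i); n-1, n-1-3i, i) (-1)^i 2^{n-1-3i}`,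
where `C_{2,2}(n)` is the coefficient of `x^n` in the unique power series `y` with zero constant
term satisfying `∑_{k=0}^{2} (-1)^k C(2,k) y^{2^k} = x`, and
`multinomial(m; a,b,c) = m!/(a! b! c!)` for `m = a + b + c`. -/
theorem statement_2
    (y : PowerSeries ℚ)
    (h0 : PowerSeries.constantCoeff y = 0)
    (heq : ∑ k ∈ Finset.range (2 + 1),
        (-1 : PowerSeries ℚ) ^ k * (Nat.choose 2 k : PowerSeries ℚ) * y ^ 2 ^ k
        = PowerSeries.X)
    (n : ℕ) (hn : 1 ≤ n) :
    PowerSeries.coeff n y =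
      (1 / (n : ℚ)) *
        ∑ i ∈ Finset.range ((n - 1) / 3 + 1),
          ((Nat.factorial (2 * (n - 1 - i)) : ℚ) /
              ((Nat.factorial (n - 1) : ℚ) * (Nat.factorial (n - 1 - 3 * i) : ℚ) *
                (Nat.factorial i : ℚ))) *
            (-1 : ℚ) ^ i * (2 : ℚ) ^ (n - 1 - 3 * i) := by
  have heq' : y = PowerSeries.X + PowerSeries.C 2 * y ^ 2 + PowerSeries.C (-1) * y ^ (3 + 1) := by
    rw [← heq, map_neg, map_one, map_ofNat]
    simp only [Finset.sum_range_succ, Finset.sum_range_zero, Nat.choose_zero_right,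
      Nat.choose_one_right, Nat.choose_self]
    push_cast
    ring
  simpa [Nat.mul_sub] using statement_2_general y h0 2 (-1) 3 three_pos heq' n hn
end

section
/- For all integers n ≥ 1, C_{3,2}(n) = (1/n) · ∑_{j=0}^{⌊(n−1)/7⌋} ∑_{i=0}^{⌊(n−1−7j)/3⌋} multinomial(2(n−1−i−3j); n−1, n−1−3i−7j, i, j) · (−1)^i · 3^{n−1−2i−7j}, where multinomial(m; a,b,c,e) = m!/(a!·b!·c!·e!) for m = a+b+c+e. -/
/-! Write the equation as `y = x φ(y)` with `1 / φ = 1 - 3t + 3t³ - t⁷`. Lagrange inversion gives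
`n [xⁿ] y = [tⁿ⁻¹] φⁿ`: for `y = x w` with `w` invertible, the change of variables `t = y(x)`
preserves residues, so `[xⁿ⁻¹] (w⁻ⁿ y' F(y)) = [tⁿ⁻¹] F`, and `F = φⁿ` cancels `w⁻ⁿ`. The
coefficients of `φⁿ` are then read off by expanding `φ` as a geometric series in one monomial of
`3t - 3t³ + t⁷` at a time, which produces exactly the nested ranges of summation. -/

open Finset PowerSeries

section LagrangeInversion

variable {R : Type*} [CommRing R]

theorem hasSubst_of_X_pow_dvd {q : ℕ} (hq : q ≠ 0) {z : R⟦X⟧} (hz : X ^ q ∣ z) : HasSubst z :=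
  .of_constantCoeff_zero' (X_dvd_iff.1 ((dvd_pow_self X hq).trans hz))

theorem subst_mul_subst_eq_one {y f g : R⟦X⟧} (hy : HasSubst y) (hfg : f * g = 1) :
    f.subst y * g.subst y = 1 := by
  rw [← subst_mul hy, hfg, ← coe_substAlgHom hy, map_one]

theorem coeff_mul_subst_eq_sum {q M N : ℕ} (hN : N < q * M) {z : R⟦X⟧} (hz : X ^ q ∣ z)
    (g f : R⟦X⟧) :
    coeff N (g * f.subst z) = ∑ j ∈ range M, coeff j f * coeff N (g * z ^ j) := by
  have hsubst := hasSubst_of_X_pow_dvd (left_ne_zero_of_mul (Nat.ne_zero_of_lt hN)) hz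
  obtain ⟨tail, hf⟩ : ∃ tail, f = X ^ M * tail + (trunc M f : R⟦X⟧) :=
    ⟨_, eq_X_pow_mul_shift_add_trunc M f⟩
  have hsplit : f.subst z =
      z ^ M * tail.subst z + ∑ j ∈ range M, C (coeff j f) * z ^ j := by
    conv_lhs => rw [hf]
    rw [subst_add hsubst, subst_mul hsubst, subst_pow hsubst, subst_X hsubst, subst_coe hsubst,
      Polynomial.aeval_def, eval₂_trunc_eq_sum_range]
    rfl
  have htail : coeff N (g * (z ^ M * tail.subst z)) = 0 := by
    refine X_pow_dvd_iff.1 (Dvd.dvd.mul_left (Dvd.dvd.mul_right ?_ _) g) N hN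
    simpa only [pow_mul] using pow_dvd_pow_of_dvd hz M
  rw [hsplit, mul_add, map_add, htail, zero_add, mul_sum, map_sum]
  simp only [mul_left_comm g, coeff_C_mul]

variable [IsAddTorsionFree R]

theorem coeff_succ_pow_succ (f : R⟦X⟧) (k : ℕ) :
    coeff (k + 1) (f ^ (k + 1)) = coeff k (f ^ k * d⁄dX R f) := by
  refine nsmul_right_injective k.succ_ne_zero ?_
  have hderiv := congrArg (coeff k) (derivative_pow f (k + 1))
  rw [coeff_derivative, add_tsub_cancel_right, mul_assoc, ← nsmul_eq_mul, map_nsmul] at hderiv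
  simpa [mul_comm] using hderiv

theorem coeff_inv_pow_succ_mul_derivative {v w : R⟦X⟧} (hvw : v * w = 1) (s : ℕ) :
    coeff s (v ^ (s + 1) * d⁄dX R (X * w)) = if s = 0 then 1 else 0 := by
  have hderiv : d⁄dX R (X * w) = w + X * d⁄dX R w := by
    rw [Derivation.leibniz, derivative_X, smul_eq_mul, smul_eq_mul, mul_one, add_comm]
  cases s with
  | zero => simpa [hderiv] using congrArg constantCoeff hvw
  | succ k =>
    have hleibniz : v * d⁄dX R w + w * d⁄dX R v = 0 := by
      simpa using congrArg (d⁄dX R) hvw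
    have hcancel :
        v ^ (k + 1 + 1) * d⁄dX R (X * w) = v ^ (k + 1) - X * (v ^ k * d⁄dX R v) := by
      rw [hderiv]
      linear_combination (v ^ (k + 1) - X * v ^ k * d⁄dX R v) * hvw + X * v ^ (k + 1) * hleibniz
    rw [hcancel, map_sub, coeff_succ_X_mul, coeff_succ_pow_succ, sub_self, if_neg k.succ_ne_zero]

theorem coeff_inv_pow_succ_mul_derivative_mul_subst {v w : R⟦X⟧} (hvw : v * w = 1) (f : R⟦X⟧)
    (n : ℕ) :
    coeff n (v ^ (n + 1) * d⁄dX R (X * w) * f.subst (X * w)) = coeff n f := by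
  have hterm : ∀ k ∈ range (n + 1),
      coeff n (v ^ (n + 1) * d⁄dX R (X * w) * (X * w) ^ k) = if n = k then 1 else 0 := by
    intro k hk
    obtain ⟨s, rfl⟩ := Nat.exists_eq_add_of_le' (mem_range_succ_iff.1 hk)
    have hcancel : v ^ (s + k + 1) * d⁄dX R (X * w) * (X * w) ^ k =
        X ^ k * (v ^ (s + 1) * d⁄dX R (X * w)) := by
      have hpow : v ^ k * w ^ k = 1 := by rw [← mul_pow, hvw, one_pow]
      linear_combination X ^ k * (v ^ (s + 1) * d⁄dX R (X * w)) * hpow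
    rw [hcancel, coeff_X_pow_mul, coeff_inv_pow_succ_mul_derivative hvw]
    simp
  rw [coeff_mul_subst_eq_sum (by omega : n < 1 * (n + 1))
    (by rw [pow_one]; exact dvd_mul_right X w), sum_congr rfl fun k hk => by rw [hterm k hk]]
  simp

theorem lagrange_inversion_s3 {φ y : R⟦X⟧} (hφ : IsUnit φ) (hy : y = X * φ.subst y) (n : ℕ) :
    (n + 1) * coeff (n + 1) y = coeff n (φ ^ (n + 1)) := by
  obtain ⟨ψ, hψφ⟩ := hφ.exists_left_inv
  have hsubst : HasSubst y := .of_constantCoeff_zero' (by rw [hy]; simp)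
  have hinv : ψ.subst y * φ.subst y = 1 := subst_mul_subst_eq_one hsubst hψφ
  calc (n + 1) * coeff (n + 1) y = coeff n (d⁄dX R y) := by rw [coeff_derivative, mul_comm]
    _ = coeff n (ψ.subst y ^ (n + 1) * d⁄dX R y * (φ ^ (n + 1)).subst y) := by
      rw [subst_pow hsubst, mul_right_comm, ← mul_pow, hinv, one_pow, one_mul]
    _ = coeff n (φ ^ (n + 1)) := by
      have hres := coeff_inv_pow_succ_mul_derivative_mul_subst hinv (φ ^ (n + 1)) n
      rwa [← hy] at hres

end LagrangeInversion

section GeometricExpansion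

variable {R : Type*} [CommRing R]

-- When `F = 1 / f`, the hypothesis on `G` says `G = 1 / (f - c X ^ q)`.
theorem coeff_pow_succ_of_mul_one_sub_eq {F G : R⟦X⟧} {c : R} {q : ℕ} (hq : q ≠ 0)
    (hG : G * (1 - C c * X ^ q * F) = F) (d N : ℕ) :
    coeff N (G ^ (d + 1)) = ∑ j ∈ range (N / q + 1),
      (d + j).choose d * c ^ j * coeff (N - q * j) (F ^ (d + j + 1)) := by
  set z := C c * X ^ q * F with hz_def
  have hz : X ^ q ∣ z := ⟨C c * F, by rw [hz_def]; ring⟩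
  have hsubst := hasSubst_of_X_pow_dvd hq hz
  set binom : R⟦X⟧ := mk fun j => ((d + j).choose d : R) with hbinom
  have hinv : (1 - z) ^ (d + 1) * binom.subst z = 1 := by
    have h := congrArg (substAlgHom hsubst) (mk_add_choose_mul_one_sub_pow_eq_one R d)
    rw [map_mul, map_pow, map_sub, map_one, substAlgHom_X, coe_substAlgHom] at h
    rw [mul_comm, h]
  have hexpand : G ^ (d + 1) = F ^ (d + 1) * binom.subst z := by
    rw [← hG, mul_pow, mul_assoc, hinv, mul_one]
  rw [hexpand, coeff_mul_subst_eq_sum (Nat.lt_mul_div_succ N (Nat.pos_of_ne_zero hq)) hz]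
  refine sum_congr rfl fun j hj => ?_
  have hjN : q * j ≤ N :=
    (Nat.mul_le_mul_left q (mem_range_succ_iff.1 hj)).trans (Nat.mul_div_le N q)
  have hterm : F ^ (d + 1) * z ^ j = C (c ^ j) * (X ^ (q * j) * F ^ (d + j + 1)) := by
    rw [hz_def, map_pow]; ring
  rw [hterm, coeff_C_mul, coeff_X_pow_mul', if_pos hjN, hbinom, coeff_mk, mul_assoc]

theorem coeff_pow_succ_of_mul_one_sub_C_mul_X_eq_one {G : R⟦X⟧} {a : R}
    (hG : G * (1 - C a * X) = 1) (d N : ℕ) :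
    coeff N (G ^ (d + 1)) = (d + N).choose d * a ^ N := by
  rw [coeff_pow_succ_of_mul_one_sub_eq (F := 1) (c := a) one_ne_zero (by simpa using hG),
    sum_eq_single N]
  · simp
  · intro j hj hjN
    have hdeg : N - 1 * j ≠ 0 := by
      rw [mem_range] at hj
      omega
    rw [one_pow, coeff_one, if_neg hdeg, mul_zero]
  · simp

theorem coeff_pow_succ_of_mul_one_sub_trinomial_eq_one {φ : R⟦X⟧} {a b c : R} {p q : ℕ}
    (hp : p ≠ 0) (hq : q ≠ 0) (hφ : φ * (1 - C a * X - C b * X ^ p - C c * X ^ q) = 1) (d N : ℕ) :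
    coeff N (φ ^ (d + 1)) =
      ∑ j ∈ range (N / q + 1), ∑ i ∈ range ((N - q * j) / p + 1),
        ((d + j).choose d * (d + j + i).choose (d + j) *
          (d + j + i + (N - q * j - p * i)).choose (d + j + i) : ℕ) *
          (a ^ (N - q * j - p * i) * b ^ i * c ^ j) := by
  have exists_inv (f : R⟦X⟧) (hf : constantCoeff f = 1) : ∃ g, g * f = 1 :=
    (isUnit_iff_constantCoeff.2 (by simp [hf])).exists_left_inv
  obtain ⟨A, hA⟩ := exists_inv (1 - C a * X) (by simp)
  obtain ⟨B, hB⟩ := exists_inv (1 - C a * X - C b * X ^ p) (by simp [hp])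
  have hBA : B * (1 - C b * X ^ p * A) = A := by linear_combination A * hB - B * hA
  have hφB : φ * (1 - C c * X ^ q * B) = B := by linear_combination B * hφ - φ * hB
  rw [coeff_pow_succ_of_mul_one_sub_eq hq hφB]
  refine sum_congr rfl fun j _ => ?_
  rw [coeff_pow_succ_of_mul_one_sub_eq hp hBA, mul_sum]
  refine sum_congr rfl fun i _ => ?_
  rw [coeff_pow_succ_of_mul_one_sub_C_mul_X_eq_one hA]
  push_cast
  ring

theorem succ_mul_coeff_succ_of_mul_one_sub_trinomial_eq_X [IsAddTorsionFree R] {y : R⟦X⟧}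
    {a b c : R} {p q : ℕ} (hp : p ≠ 0) (hq : q ≠ 0) (h0 : constantCoeff y = 0)
    (hy : y * (1 - C a * y - C b * y ^ p - C c * y ^ q) = X) (N : ℕ) :
    (N + 1) * coeff (N + 1) y =
      ∑ j ∈ range (N / q + 1), ∑ i ∈ range ((N - q * j) / p + 1),
        ((N + j).choose N * (N + j + i).choose (N + j) *
          (N + j + i + (N - q * j - p * i)).choose (N + j + i) : ℕ) *
          (a ^ (N - q * j - p * i) * b ^ i * c ^ j) := by
  set f : R⟦X⟧ := 1 - C a * X - C b * X ^ p - C c * X ^ q with hf_def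
  have hf : IsUnit f := isUnit_iff_constantCoeff.2 (by simp [hf_def, hp, hq])
  obtain ⟨φ, hφ⟩ := hf.exists_left_inv
  have hsubst : HasSubst y := .of_constantCoeff_zero' h0
  have hf_subst : f.subst y = 1 - C a * y - C b * y ^ p - C c * y ^ q := by
    rw [hf_def, ← coe_substAlgHom hsubst]
    simp only [map_sub, map_mul, map_pow, map_one, substAlgHom_X, coe_substAlgHom, subst_C]
    rfl
  have hfix : y = X * φ.subst y := by
    rw [← hy, ← hf_subst, mul_assoc, mul_comm (f.subst y), subst_mul_subst_eq_one hsubst hφ,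
      mul_one]
  rw [lagrange_inversion_s3 (.of_mul_eq_one f hφ) hfix]
  exact coeff_pow_succ_of_mul_one_sub_trinomial_eq_one hp hq hφ N N

end GeometricExpansion

theorem cast_choose_mul_choose_mul_choose (K : Type*) [Field K] [CharZero K] (d j i k : ℕ) :
    (((d + j).choose d * (d + j + i).choose (d + j) *
        (d + j + i + k).choose (d + j + i) : ℕ) : K) =
      (d + j + i + k).factorial / (d.factorial * k.factorial * i.factorial * j.factorial) := by
  have h (m : ℕ) : (m.factorial : K) ≠ 0 := Nat.cast_ne_zero.2 m.factorial_ne_zero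
  push_cast
  rw [Nat.cast_add_choose, Nat.cast_add_choose, Nat.cast_add_choose]
  field_simp [h]

theorem statement_3_general {K : Type*} [Field K] [CharZero K]
    (y : PowerSeries K)
    (h0 : PowerSeries.constantCoeff y = 0)
    (heq : ∑ k ∈ Finset.range (3 + 1),
        (-1 : PowerSeries K) ^ k * (Nat.choose 3 k : PowerSeries K) * y ^ 2 ^ k
        = PowerSeries.X)
    (n : ℕ) (hn : 1 ≤ n) :
    PowerSeries.coeff n y =
      (1 / (n : K)) *
        ∑ j ∈ Finset.range ((n - 1) / 7 + 1),
          ∑ i ∈ Finset.range ((n - 1 - 7 * j) / 3 + 1),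
            ((Nat.factorial (2 * (n - 1 - i - 3 * j)) : K) /
                ((Nat.factorial (n - 1) : K) * (Nat.factorial (n - 1 - 3 * i - 7 * j) : K) *
                  (Nat.factorial i : K) * (Nat.factorial j : K))) *
              (-1 : K) ^ i * (3 : K) ^ (n - 1 - 2 * i - 7 * j) := by
  obtain ⟨N, rfl⟩ := Nat.exists_eq_add_of_le' hn
  have hy : y * (1 - C 3 * y - C (-3) * y ^ 3 - C 1 * y ^ 7) = X := by
    rw [← heq]
    simp only [sum_range_succ, range_one, sum_singleton, Nat.choose, Nat.reduceAdd, Nat.reducePow,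
      Nat.cast_one, Nat.cast_ofNat, map_one, map_neg, map_ofNat (C : K →+* K⟦X⟧)]
    ring
  have hN : (N + 1 : K) ≠ 0 := N.cast_add_one_ne_zero
  rw [Nat.cast_add_one, one_div, eq_inv_mul_iff_mul_eq₀ hN,
    succ_mul_coeff_succ_of_mul_one_sub_trinomial_eq_X three_ne_zero (by norm_num) h0 hy,
    add_tsub_cancel_right]
  refine sum_congr rfl fun j hj => sum_congr rfl fun i hi => ?_
  obtain ⟨k, hk⟩ : ∃ k, N = k + 3 * i + 7 * j := by
    rw [mem_range] at hi hj
    exact ⟨N - 3 * i - 7 * j, by omega⟩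
  rw [show N - 7 * j - 3 * i = k by omega, show N - 3 * i - 7 * j = k by omega,
    show N - 2 * i - 7 * j = k + i by omega,
    show 2 * (N - i - 3 * j) = N + j + i + k by omega,
    cast_choose_mul_choose_mul_choose, neg_pow (3 : K) i]
  ring

/-- For all `n ≥ 1`,
`C_{3,2}(n) = (1/n) ⬝ ∑_{j=0}^{⌊(n-1)/7⌋} ∑_{i=0}^{⌊(n-1-7j)/3⌋}
  multinomial(2(n-1-i-3j); n-1, n-1-3i-7j, i, j) (-1)^i 3^{n-1-2i-7j}`,
where `C_{3,2}(n)` is the coefficient of `x^n` in the unique power series `y` with zero constant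
term satisfying `∑_{k=0}^{3} (-1)^k C(3,k) y^{2^k} = x`, and
`multinomial(m; a,b,c,e) = m!/(a! b! c! e!)` for `m = a + b + c + e`. -/
theorem statement_3
    (y : PowerSeries ℚ)
    (h0 : PowerSeries.constantCoeff y = 0)
    (heq : ∑ k ∈ Finset.range (3 + 1),
        (-1 : PowerSeries ℚ) ^ k * (Nat.choose 3 k : PowerSeries ℚ) * y ^ 2 ^ k
        = PowerSeries.X)
    (n : ℕ) (hn : 1 ≤ n) :
    PowerSeries.coeff n y =
      (1 / (n : ℚ)) *
        ∑ j ∈ Finset.range ((n - 1) / 7 + 1),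
          ∑ i ∈ Finset.range ((n - 1 - 7 * j) / 3 + 1),
            ((Nat.factorial (2 * (n - 1 - i - 3 * j)) : ℚ) /
                ((Nat.factorial (n - 1) : ℚ) * (Nat.factorial (n - 1 - 3 * i - 7 * j) : ℚ) *
                  (Nat.factorial i : ℚ) * (Nat.factorial j : ℚ))) *
              (-1 : ℚ) ^ i * (3 : ℚ) ^ (n - 1 - 2 * i - 7 * j) :=
  statement_3_general y h0 heq n hn
end

section
/- For all integers d ≥ 1, p ≥ 2, and n ≥ 1, if n is not congruent to 1 modulo p−1 then C_{d,p}(n) = 0. (Equivalently, the power series y_{d,p} is (p−1)-periodic.) -/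
/-!
Grade power series by the residue modulo `q` of their exponents, and let `P` be a polynomial with
all exponents `≡ 1`, so that `P(z)` has degree `1` whenever `z` does. If `P(y)` has degree `1` but
`y` does not, let `n` be the first bad exponent of `y` and `z` the truncation of `y` below `n`.
Then `P(y)` and `P(z)` both have degree `1`, whereas `P(y) - P(z)` has the coefficient
`P.coeff 1 * coeff n y` at `n`, because `y ^ k - z ^ k` is divisible by `X * (y - z)` for `k ≠ 1`.
The theorem is the case `q = p - 1`, since every `p ^ k` is `≡ 1` modulo `p - 1`.
-/

open scoped Polynomial PowerSeries
open Polynomial (aeval)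

section Divisibility

variable {A : Type*} [CommRing A] {a x y : A}

theorem mul_sub_dvd_pow_sub_pow (hx : a ∣ x) (hy : a ∣ y) {k : ℕ} (hk : k ≠ 1) :
    a * (x - y) ∣ x ^ k - y ^ k := by
  rcases k with _ | _ | k
  · simp
  · exact absurd rfl hk
  · have split : x ^ (k + 2) - y ^ (k + 2) =
        x * (x ^ (k + 1) - y ^ (k + 1)) + y ^ (k + 1) * (x - y) := by ring
    rw [split]
    exact dvd_add (mul_dvd_mul hx (sub_dvd_pow_sub_pow x y (k + 1)))
      (mul_dvd_mul_right (dvd_pow hy k.succ_ne_zero) _)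

theorem mul_sub_dvd_aeval_sub_aeval_sub {R : Type*} [CommRing R] [Algebra R A]
    (hx : a ∣ x) (hy : a ∣ y) (P : R[X]) :
    a * (x - y) ∣ aeval x P - aeval y P - P.coeff 1 • (x - y) := by
  induction P using Polynomial.induction_on' with
  | add P Q hP hQ =>
    convert dvd_add hP hQ using 1
    simp only [map_add, Polynomial.coeff_add, add_smul]
    ring
  | monomial k c =>
    simp only [Polynomial.aeval_monomial, Polynomial.coeff_monomial, ← mul_sub]
    split_ifs with hk
    · simp [hk, Algebra.smul_def]
    · simpa using (mul_sub_dvd_pow_sub_pow hx hy hk).mul_left (algebraMap R A c)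

end Divisibility

/-- The power series all of whose exponents lie in the residue class `r` modulo `q`. These are the
graded pieces of `R⟦X⟧` used in the proof, and the series called `q`-periodic are those of
degree `r = 1`. Residues are elements of `ZMod q` so that degrees add under multiplication. -/
def residueSubmodule (R : Type*) [CommRing R] (q : ℕ) (r : ZMod q) : Submodule R R⟦X⟧ where
  carrier := {f | ∀ n : ℕ, (n : ZMod q) ≠ r → PowerSeries.coeff n f = 0}
  zero_mem' := by simp
  add_mem' hf hg n hn := by simp [hf n hn, hg n hn]
  smul_mem' c f hf n hn := by simp [hf n hn]

namespace residueSubmodule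

variable {R : Type*} [CommRing R] {q : ℕ}

theorem X_mem : (PowerSeries.X : R⟦X⟧) ∈ residueSubmodule R q 1 := by
  intro n hn
  rw [PowerSeries.coeff_X, if_neg]
  rintro rfl
  exact hn Nat.cast_one

instance gradedMonoid : SetLike.GradedMonoid (residueSubmodule R q) where
  one_mem n hn := by
    rw [PowerSeries.coeff_one, if_neg]
    rintro rfl
    exact hn Nat.cast_zero
  mul_mem r s f g hf hg n hn := by
    rw [PowerSeries.coeff_mul]
    refine Finset.sum_eq_zero fun ij hij => ?_
    by_cases hi : (ij.1 : ZMod q) = r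
    · have hj : (ij.2 : ZMod q) ≠ s := by
        rintro rfl
        exact hn (by rw [← Finset.HasAntidiagonal.mem_antidiagonal.mp hij, Nat.cast_add, hi])
      rw [hg _ hj, mul_zero]
    · rw [hf _ hi, zero_mul]

theorem pow_mem {y : R⟦X⟧} (hy : y ∈ residueSubmodule R q 1) (k : ℕ) :
    y ^ k ∈ residueSubmodule R q k := by
  simpa using SetLike.pow_mem_graded k hy

theorem aeval_mem {P : R[X]} {r : ZMod q} (hP : (P : R⟦X⟧) ∈ residueSubmodule R q r)
    {y : R⟦X⟧} (hy : y ∈ residueSubmodule R q 1) :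
    aeval y P ∈ residueSubmodule R q r := by
  rw [Polynomial.aeval_eq_sum_range]
  refine Submodule.sum_mem _ fun k _ => ?_
  by_cases hk : (k : ZMod q) = r
  · exact Submodule.smul_mem _ _ (hk ▸ pow_mem hy k)
  · rw [← Polynomial.coeff_coe, hP k hk, zero_smul]
    exact Submodule.zero_mem _

theorem trunc_mem {r : ZMod q} {y : R⟦X⟧} {n : ℕ}
    (hy : ∀ m < n, (m : ZMod q) ≠ r → PowerSeries.coeff m y = 0) :
    (PowerSeries.trunc n y : R⟦X⟧) ∈ residueSubmodule R q r := by
  intro m hm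
  rw [Polynomial.coeff_coe, PowerSeries.coeff_trunc]
  split_ifs with hmn
  · exact hy m hmn hm
  · rfl

end residueSubmodule

section Substitution

variable {R : Type*} [CommRing R]

theorem X_pow_dvd_sub_trunc (y : R⟦X⟧) (n : ℕ) :
    (PowerSeries.X : R⟦X⟧) ^ n ∣ y - PowerSeries.trunc n y := by
  rw [PowerSeries.X_pow_dvd_iff]
  intro m hm
  simp [PowerSeries.coeff_trunc, hm]

theorem X_dvd_trunc {y : R⟦X⟧} (h0 : PowerSeries.constantCoeff y = 0) (n : ℕ) :
    (PowerSeries.X : R⟦X⟧) ∣ PowerSeries.trunc n y := by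
  simp [PowerSeries.X_dvd_iff, ← PowerSeries.coeff_zero_eq_constantCoeff_apply,
    PowerSeries.coeff_trunc, h0]

theorem coeff_aeval_sub_coeff_aeval_trunc (P : R[X]) {y : R⟦X⟧}
    (h0 : PowerSeries.constantCoeff y = 0) (n : ℕ) :
    PowerSeries.coeff n (aeval y P) -
      PowerSeries.coeff n (aeval (PowerSeries.trunc n y : R⟦X⟧) P) =
    P.coeff 1 * PowerSeries.coeff n y := by
  have hdvd : (PowerSeries.X : R⟦X⟧) ^ (n + 1) ∣
      aeval y P - aeval (PowerSeries.trunc n y : R⟦X⟧) P -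
        P.coeff 1 • (y - PowerSeries.trunc n y) := by
    rw [pow_succ']
    exact (mul_dvd_mul_left _ (X_pow_dvd_sub_trunc y n)).trans
      (mul_sub_dvd_aeval_sub_aeval_sub (PowerSeries.X_dvd_iff.mpr h0) (X_dvd_trunc h0 n) P)
  have hcoeff := PowerSeries.X_pow_dvd_iff.mp hdvd n n.lt_succ_self
  simpa [PowerSeries.coeff_trunc, sub_eq_zero] using hcoeff

theorem mem_residueSubmodule_of_aeval_mem {q : ℕ} {P : R[X]}
    (hP : (P : R⟦X⟧) ∈ residueSubmodule R q 1) (hP1 : P.coeff 1 ∈ nonZeroDivisors R)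
    {y : R⟦X⟧} (h0 : PowerSeries.constantCoeff y = 0)
    (hPy : aeval y P ∈ residueSubmodule R q 1) :
    y ∈ residueSubmodule R q 1 := by
  intro n
  induction n using Nat.strong_induction_on with
  | _ n ih =>
    intro hn
    have hPz := residueSubmodule.aeval_mem hP (residueSubmodule.trunc_mem ih)
    have hmul := coeff_aeval_sub_coeff_aeval_trunc P h0 n
    rw [hPy n hn, hPz n hn, sub_zero] at hmul
    exact (mul_left_mem_nonZeroDivisors_eq_zero_iff hP1).mp hmul.symm

end Substitution

/-- The polynomial `∑ₖ (-1)ᵏ (d choose k) X ^ (p ^ k)`, whose compositional inverse is the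
generating series of the `p`-ary orthogonal partitions of the `d`-dimensional hypercube. -/
noncomputable def partitionPolynomial (R : Type*) [CommRing R] (d p : ℕ) : R[X] :=
  ∑ k ∈ Finset.range (d + 1), (-1) ^ k * (d.choose k : R[X]) * Polynomial.X ^ p ^ k

namespace partitionPolynomial

variable {R : Type*} [CommRing R] (d : ℕ) {p : ℕ}

theorem aeval_eq (p : ℕ) (y : R⟦X⟧) :
    aeval y (partitionPolynomial R d p) =
      ∑ k ∈ Finset.range (d + 1), (-1) ^ k * (d.choose k : R⟦X⟧) * y ^ p ^ k := by
  simp [partitionPolynomial]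

theorem coeff_eq (p n : ℕ) :
    (partitionPolynomial R d p).coeff n =
      ∑ k ∈ Finset.range (d + 1), if n = p ^ k then (-1) ^ k * (d.choose k : R) else 0 := by
  rw [partitionPolynomial, Polynomial.finsetSum_coeff]
  refine Finset.sum_congr rfl fun k _ => ?_
  rw [← Polynomial.coeff_C_mul_X_pow]
  simp

theorem coeff_one (hp : 2 ≤ p) : (partitionPolynomial R d p).coeff 1 = 1 := by
  have hpow (k : ℕ) : 1 = p ^ k ↔ k = 0 := by
    rw [eq_comm, Nat.pow_eq_one]
    omega
  simp [coeff_eq, hpow]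

theorem coe_mem_residueSubmodule (hp : 1 ≤ p) :
    (partitionPolynomial R d p : R⟦X⟧) ∈ residueSubmodule R (p - 1) 1 := by
  have hp1 : (p : ZMod (p - 1)) = 1 := by
    have hmod : p ≡ 1 [MOD p - 1] := ((Nat.modEq_iff_dvd' hp).mpr dvd_rfl).symm
    exact ((ZMod.natCast_eq_natCast_iff p 1 _).mpr hmod).trans Nat.cast_one
  intro n hn
  rw [Polynomial.coeff_coe, coeff_eq]
  refine Finset.sum_eq_zero fun k _ => if_neg ?_
  rintro rfl
  exact hn (by rw [Nat.cast_pow, hp1, one_pow])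

end partitionPolynomial

theorem statement_6_general {R : Type*} [CommRing R] (d p : ℕ) (hp : 2 ≤ p) (y : R⟦X⟧)
    (h0 : PowerSeries.constantCoeff y = 0)
    (heq : ∑ k ∈ Finset.range (d + 1), (-1 : R⟦X⟧) ^ k * (d.choose k : R⟦X⟧) * y ^ p ^ k
      = PowerSeries.X)
    (n : ℕ) (hmod : ¬ n ≡ 1 [MOD p - 1]) :
    PowerSeries.coeff n y = 0 := by
  have hPy : aeval y (partitionPolynomial R d p) ∈ residueSubmodule R (p - 1) 1 := by
    rw [partitionPolynomial.aeval_eq, heq]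
    exact residueSubmodule.X_mem
  have hP1 : (partitionPolynomial R d p).coeff 1 ∈ nonZeroDivisors R := by
    rw [partitionPolynomial.coeff_one d hp]
    exact one_mem _
  have hy : y ∈ residueSubmodule R (p - 1) 1 := mem_residueSubmodule_of_aeval_mem
    (partitionPolynomial.coe_mem_residueSubmodule d (by omega)) hP1 h0 hPy
  exact hy n fun hn => hmod ((ZMod.natCast_eq_natCast_iff n 1 _).mp (hn.trans Nat.cast_one.symm))

/-- For all `d ≥ 1`, `p ≥ 2`, `n ≥ 1`: if `n` is not congruent to `1` modulo
`p - 1`, then `C_{d,p}(n) = 0`, where `C_{d,p}(n)` is the coefficient of `x^n` in the unique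
power series `y` with zero constant term satisfying `∑_{k=0}^{d} (-1)^k C(d,k) y^{p^k} = x`.
(Equivalently, `y` is `(p-1)`-periodic.) -/
theorem statement_6 (d p : ℕ) (hd : 1 ≤ d) (hp : 2 ≤ p)
    (y : PowerSeries ℚ)
    (h0 : PowerSeries.constantCoeff y = 0)
    (heq : ∑ k ∈ Finset.range (d + 1),
        (-1 : PowerSeries ℚ) ^ k * (d.choose k : PowerSeries ℚ) * y ^ p ^ k
        = PowerSeries.X)
    (n : ℕ) (hn : 1 ≤ n) (hmod : ¬ n ≡ 1 [MOD p - 1]) :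
    PowerSeries.coeff n y = 0 :=
  statement_6_general d p hp y h0 heq n hmod
end

section
/- Fix integers d ≥ 1 and p ≥ 2, and let s > 0 be the smallest positive real number with q_{d,p}'(s) = 0. Then, as n → ∞ along integers n ≡ 1 (mod p−1), C_{d,p}(n) ∼ (p−1)/√(−2π·q_{d,p}''(s)) · n^{−3/2} · q_{d,p}(s)^{1/2 − n}; that is, the ratio C_{d,p}(n) · n^{3/2} · q_{d,p}(s)^{n − 1/2} · √(−2π·q_{d,p}''(s)) / (p−1) tends to 1 along this arithmetic progression. -/
open Filter

/-!
Write `q_d` for the polynomial of the theorem. Lagrange inversion expresses `n * C(n)` as a contour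
integral of `q_d ^ (-n)` over the circle `‖z‖ = s`. Since `q_d(w z) = w q_d(z)` when
`w ^ (p - 1) = 1`, for `n ≡ 1 (mod p - 1)` the integral is `p - 1` times the one over the arc
`|arg z| ≤ π / (p - 1)`, and Laplace's method at the critical point `s` evaluates the latter.

What has to be shown is that `q_d` has no zero in the disc `‖z‖ ≤ s` except `0`, and that on the arc
`‖q_d‖` is minimal only at `s`. One has `q_{k+1}(z) = q_k(z) (1 - r_k(z))` with
`r_k(z) = q_k(z ^ p) / q_k(z)`. The Taylor coefficients of `r_k` are natural numbers, because
`r_{k+1}(z) = r_k(z) (1 - r_k(z ^ p)) / (1 - r_k(z))` and, for `f` with natural coefficients,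
`(1 - f(z ^ p)) / (1 - f(z)) = ∑_{i < p} f(z) ^ i + (f(z) ^ p - f(z ^ p)) / (1 - f(z))`,
the numerator `f(z) ^ p - f(z ^ p)` having natural coefficients again. Hence, for `k < d`,
`‖r_k(z)‖ ≤ r_k(‖z‖) < 1`, so each factor `1 - r_k` is smallest in norm on the positive axis, and
the very first one, `1 - z ^ (p - 1)`, is so strictly within the arc.
-/

section NatSeries

/-- The graph of evaluation on the disc `‖z‖ ≤ t`: the pairs `(a, f)` of a power series with
natural coefficients and a function to which it converges there. -/
def natSeriesGraph (t : ℝ) : Subsemiring (PowerSeries ℕ × (ℂ → ℂ)) where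
  carrier := {af | ∀ z : ℂ, ‖z‖ ≤ t →
    HasSum (fun n => ((PowerSeries.coeff n af.1 : ℕ) : ℂ) * z ^ n) (af.2 z)}
  one_mem' z _ := by
    convert! hasSum_ite_eq (0 : ℕ) (1 : ℂ) using 2 with n
    rcases eq_or_ne n 0 with rfl | hn <;> simp [PowerSeries.coeff_one, *]
  mul_mem' {af bg} ha hb z hz := by
    have h := hasSum_sum_range_mul_of_summable_norm (ha z hz).summable.norm (hb z hz).summable.norm
    rw [(ha z hz).tsum_eq, (hb z hz).tsum_eq] at h
    refine h.congr_fun fun n => ?_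
    rw [Prod.fst_mul, PowerSeries.coeff_mul, Finset.Nat.sum_antidiagonal_eq_sum_range_succ_mk]
    push_cast
    rw [Finset.sum_mul]
    refine Finset.sum_congr rfl fun k hk => ?_
    rw [← pow_mul_pow_sub z (Finset.mem_range_succ_iff.1 hk)]
    ring
  zero_mem' z _ := by simp
  add_mem' {af bg} ha hb z hz := by
    simpa [add_mul] using (ha z hz).add (hb z hz)

/-- The functions that are given on the disc `‖z‖ ≤ t` by a convergent power series with natural
coefficients. -/
noncomputable def natSeriesOn (t : ℝ) : Subsemiring (ℂ → ℂ) :=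
  (natSeriesGraph t).map (RingHom.snd _ _)

variable {t : ℝ} {f g : ℂ → ℂ} {a : PowerSeries ℕ}

theorem mem_natSeriesGraph_iff :
    (a, f) ∈ natSeriesGraph t ↔
      ∀ z : ℂ, ‖z‖ ≤ t → HasSum (fun n => ((PowerSeries.coeff n a : ℕ) : ℂ) * z ^ n) (f z) :=
  Iff.rfl

theorem mem_natSeriesOn_iff :
    f ∈ natSeriesOn t ↔ ∃ a : PowerSeries ℕ, (a, f) ∈ natSeriesGraph t := by
  simp [natSeriesOn]

theorem natSeriesOn_congr (hf : f ∈ natSeriesOn t) (hfg : ∀ z : ℂ, ‖z‖ ≤ t → f z = g z) :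
    g ∈ natSeriesOn t := by
  obtain ⟨a, ha⟩ := mem_natSeriesOn_iff.1 hf
  exact mem_natSeriesOn_iff.2 ⟨a, fun z hz => by
    simpa only [hfg z hz] using mem_natSeriesGraph_iff.1 ha z hz⟩

theorem id_mem_natSeriesOn (t : ℝ) : id ∈ natSeriesOn t := by
  refine mem_natSeriesOn_iff.2 ⟨PowerSeries.X, fun z _ => ?_⟩
  convert! hasSum_ite_eq (1 : ℕ) z using 2 with n
  rcases eq_or_ne n 1 with rfl | hn <;> simp [PowerSeries.coeff_X, *]

theorem hasSum_norm_of_mem_natSeriesGraph (ht : 0 ≤ t) (h : (a, f) ∈ natSeriesGraph t) :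
    HasSum (fun n => ((PowerSeries.coeff n a : ℕ) : ℝ) * t ^ n) ‖f t‖ := by
  have hft := mem_natSeriesGraph_iff.1 h t (by simp [abs_of_nonneg ht])
  have hsum : Summable fun n => ((PowerSeries.coeff n a : ℕ) : ℝ) * t ^ n := by
    simpa [abs_of_nonneg ht] using hft.summable.norm
  have hval : f t = ((∑' n, ((PowerSeries.coeff n a : ℕ) : ℝ) * t ^ n : ℝ) : ℂ) := by
    rw [← hft.tsum_eq]
    push_cast
    rfl
  rw [hval, Complex.norm_of_nonneg (tsum_nonneg fun n => by positivity)]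
  exact hsum.hasSum

theorem norm_le_of_mem_natSeriesOn (hf : f ∈ natSeriesOn t) {z : ℂ} (hz : ‖z‖ ≤ t) :
    ‖f z‖ ≤ ‖f t‖ := by
  obtain ⟨a, ha⟩ := mem_natSeriesOn_iff.1 hf
  have hsum := hasSum_norm_of_mem_natSeriesGraph ((norm_nonneg z).trans hz) ha
  rw [← (mem_natSeriesGraph_iff.1 ha z hz).tsum_eq]
  refine tsum_of_norm_bounded hsum fun n => ?_
  simp only [norm_mul, norm_pow, Complex.norm_natCast]
  gcongr

theorem coeff_zero_eq_zero_of_mem_natSeriesGraph (ht : 0 ≤ t) (h : (a, f) ∈ natSeriesGraph t)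
    (hlt : ‖f t‖ < 1) : PowerSeries.coeff 0 a = 0 := by
  have h0 := le_hasSum (hasSum_norm_of_mem_natSeriesGraph ht h) 0 fun n _ => by positivity
  rw [pow_zero, mul_one] at h0
  exact Nat.lt_one_iff.1 (by exact_mod_cast h0.trans_lt hlt)

theorem coeff_pow_eq_zero_of_lt {R : Type*} [CommSemiring R] {a : PowerSeries R}
    (h0 : PowerSeries.coeff 0 a = 0) {n k : ℕ} (h : n < k) : PowerSeries.coeff n (a ^ k) = 0 := by
  have hX : PowerSeries.X ∣ a := PowerSeries.X_dvd_iff.2 (by simpa using h0)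
  exact PowerSeries.X_pow_dvd_iff.1 (pow_dvd_pow_of_dvd hX k) n h

theorem one_sub_inv_mem_natSeriesOn (ht : 0 ≤ t) (hf : f ∈ natSeriesOn t) (hlt : ‖f t‖ < 1) :
    (fun z => (1 - f z)⁻¹) ∈ natSeriesOn t := by
  obtain ⟨a, ha⟩ := mem_natSeriesOn_iff.1 hf
  have hpow (k : ℕ) : (a ^ k, f ^ k) ∈ natSeriesGraph t := pow_mem ha k
  refine mem_natSeriesOn_iff.2
    ⟨PowerSeries.mk fun n => ∑ k ∈ Finset.range (n + 1), PowerSeries.coeff n (a ^ k),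
      fun z hz => ?_⟩
  set F : ℕ × ℕ → ℂ := fun kn => ((PowerSeries.coeff kn.2 (a ^ kn.1) : ℕ) : ℂ) * z ^ kn.2 with hF
  have hz1 : ‖f z‖ < 1 := (norm_le_of_mem_natSeriesOn hf hz).trans_lt hlt
  have hrow (k : ℕ) : HasSum (fun n => F (k, n)) (f z ^ k) := hpow k z hz
  have hsum : Summable F := by
    have hmajor : Summable fun kn : ℕ × ℕ =>
        ((PowerSeries.coeff kn.2 (a ^ kn.1) : ℕ) : ℝ) * t ^ kn.2 := by
      have hrow' (k : ℕ) := hasSum_norm_of_mem_natSeriesGraph ht (hpow k)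
      refine (summable_prod_of_nonneg fun kn => by positivity).2
        ⟨fun k => (hrow' k).summable, ?_⟩
      simp only [(hrow' _).tsum_eq, Pi.pow_apply, norm_pow]
      exact summable_geometric_of_lt_one (norm_nonneg _) hlt
    refine hmajor.of_norm_bounded fun kn => ?_
    simp only [hF, norm_mul, norm_pow, Complex.norm_natCast]
    gcongr
  have htotal : HasSum F (1 - f z)⁻¹ := by
    rw [← (hsum.hasSum.prod_fiberwise hrow).unique (hasSum_geometric_of_norm_lt_one hz1)]
    exact hsum.hasSum
  refine ((Equiv.prodComm ℕ ℕ).hasSum_iff.2 htotal).prod_fiberwise fun n => ?_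
  rw [PowerSeries.coeff_mk, Nat.cast_sum, Finset.sum_mul]
  refine hasSum_sum_of_ne_finset_zero fun k hk => ?_
  have ha0 := coeff_zero_eq_zero_of_mem_natSeriesGraph ht ha hlt
  rw [Finset.mem_range_succ_iff, not_le] at hk
  simp [hF, coeff_pow_eq_zero_of_lt ha0 hk]

theorem coeff_pow_le_coeff_mul_pow (a : PowerSeries ℕ) (m k : ℕ) :
    PowerSeries.coeff m a ^ k ≤ PowerSeries.coeff (k * m) (a ^ k) := by
  induction k with
  | zero => simp
  | succ k ih =>
    calc PowerSeries.coeff m a ^ (k + 1)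
      _ ≤ PowerSeries.coeff (k * m) (a ^ k) * PowerSeries.coeff m a := by
        rw [pow_succ]; gcongr
      _ ≤ PowerSeries.coeff ((k + 1) * m) (a ^ (k + 1)) := by
        rw [pow_succ, PowerSeries.coeff_mul]
        exact Finset.single_le_sum
          (f := fun x : ℕ × ℕ => PowerSeries.coeff x.1 (a ^ k) * PowerSeries.coeff x.2 a)
          (fun _ _ => Nat.zero_le _) (a := (k * m, m)) (by simp; ring)

-- The coefficient `a_m` of `f (z ^ p)` at `z ^ (p m)` is an integer, so at most `a_m ^ p`, which is
-- one of the terms making up the coefficient of `f z ^ p`.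
theorem pow_sub_comp_pow_mem_natSeriesOn {p : ℕ} (hp : p ≠ 0) (ht1 : t ≤ 1)
    (hf : f ∈ natSeriesOn t) : (fun z => f z ^ p - f (z ^ p)) ∈ natSeriesOn t := by
  obtain ⟨a, ha⟩ := mem_natSeriesOn_iff.1 hf
  have hpow : (a ^ p, f ^ p) ∈ natSeriesGraph t := pow_mem ha p
  have hinj : Function.Injective (p * ·) := mul_right_injective₀ hp
  set e : ℕ → ℕ := Function.extend (p * ·) (fun m => PowerSeries.coeff m a) 0
  have he_mul (m : ℕ) : e (p * m) = PowerSeries.coeff m a := hinj.extend_apply _ _ m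
  have he_ne {n : ℕ} (hn : n ∉ Set.range (p * ·)) : e n = 0 := Function.extend_apply' _ _ n hn
  have hle (n : ℕ) : e n ≤ PowerSeries.coeff n (a ^ p) := by
    by_cases hn : n ∈ Set.range (p * ·)
    · obtain ⟨m, rfl⟩ := hn
      exact (he_mul m).trans_le ((Nat.le_self_pow hp _).trans (coeff_pow_le_coeff_mul_pow a m p))
    · simp [he_ne hn]
  refine mem_natSeriesOn_iff.2
    ⟨PowerSeries.mk fun n => PowerSeries.coeff n (a ^ p) - e n, fun z hz => ?_⟩
  have hzp : ‖z ^ p‖ ≤ t := by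
    rw [norm_pow]
    exact (pow_le_of_le_one (norm_nonneg _) (hz.trans ht1) hp).trans hz
  have hcomp : HasSum (fun n => (e n : ℂ) * z ^ n) (f (z ^ p)) := by
    refine (hinj.hasSum_iff fun n hn => by simp [he_ne hn]).1 ?_
    simpa [Function.comp_def, he_mul, pow_mul] using ha (z ^ p) hzp
  refine ((hpow z hz).sub hcomp).congr_fun fun n => ?_
  rw [PowerSeries.coeff_mk, Nat.cast_sub (hle n), sub_mul]

theorem one_sub_comp_pow_div_one_sub_mem_natSeriesOn {p : ℕ} (hp : p ≠ 0) (ht : 0 ≤ t)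
    (ht1 : t ≤ 1) (hf : f ∈ natSeriesOn t) (hlt : ‖f t‖ < 1) :
    (fun z => (1 - f (z ^ p)) / (1 - f z)) ∈ natSeriesOn t := by
  have hgeom : ∑ i ∈ Finset.range p, f ^ i ∈ natSeriesOn t := sum_mem fun i _ => pow_mem hf i
  refine natSeriesOn_congr (add_mem hgeom (mul_mem (pow_sub_comp_pow_mem_natSeriesOn hp ht1 hf)
    (one_sub_inv_mem_natSeriesOn ht hf hlt))) fun z hz => ?_
  have hne : 1 - f z ≠ 0 := by
    refine sub_ne_zero.2 fun h => ?_
    have := (norm_le_of_mem_natSeriesOn hf hz).trans_lt hlt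
    simp [← h] at this
  have hsum := mul_neg_geom_sum (f z) p
  simp only [Pi.add_apply, Finset.sum_apply, Pi.pow_apply, Pi.mul_apply]
  field_simp
  linear_combination hsum

end NatSeries

section CompositionalInverse

open Polynomial

variable {R : Type*} [CommRing R] {f : R[X]} {y : PowerSeries R}

theorem constantCoeff_map_eq_zero {S : Type*} [CommRing S] (φ : R →+* S)
    (hy0 : PowerSeries.constantCoeff y = 0) :
    PowerSeries.constantCoeff (PowerSeries.map φ y) = 0 := by
  rw [← PowerSeries.coeff_zero_eq_constantCoeff_apply] at hy0 ⊢
  rw [PowerSeries.coeff_map, hy0, map_zero]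

theorem constantCoeff_aeval_of_constantCoeff_eq_zero (hy0 : PowerSeries.constantCoeff y = 0)
    (g : R[X]) : PowerSeries.constantCoeff (aeval y g) = g.coeff 0 := by
  rw [aeval_def, hom_eval₂, hy0, eval₂_at_zero]
  exact PowerSeries.constantCoeff_C _

theorem coeff_zero_eq_zero_of_aeval_eq_X (hy0 : PowerSeries.constantCoeff y = 0)
    (hy : aeval y f = PowerSeries.X) : f.coeff 0 = 0 := by
  rw [← constantCoeff_aeval_of_constantCoeff_eq_zero hy0, hy, PowerSeries.constantCoeff_X]

theorem isUnit_coeff_one_of_aeval_eq_X (hy0 : PowerSeries.constantCoeff y = 0)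
    (hy : aeval y f = PowerSeries.X) : IsUnit (f.coeff 1) := by
  have hderiv : aeval y (derivative f) * PowerSeries.derivative R y = 1 := by
    rw [← smul_eq_mul, ← Derivation.map_aeval, hy, PowerSeries.derivative_X]
  have h := congrArg PowerSeries.constantCoeff hderiv
  rw [map_mul, constantCoeff_aeval_of_constantCoeff_eq_zero hy0, coeff_derivative, map_one] at h
  exact IsUnit.of_mul_eq_one _ (by simpa using h)

theorem subst_eq_X_of_aeval_eq_X (hy0 : PowerSeries.constantCoeff y = 0)
    (hy : aeval y f = PowerSeries.X) : y.subst (f : PowerSeries R) = PowerSeries.X := by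
  have hf0 : PowerSeries.constantCoeff (f : PowerSeries R) = 0 := by
    simpa using coeff_zero_eq_zero_of_aeval_eq_X hy0 hy
  have hf1 : IsUnit (PowerSeries.coeff 1 (f : PowerSeries R)) := by
    simpa using isUnit_coeff_one_of_aeval_eq_X hy0 hy
  have hfs := PowerSeries.HasSubst.of_constantCoeff_zero' hf0
  have hys := PowerSeries.HasSubst.of_constantCoeff_zero' hy0
  set g := PowerSeries.substInvOfIsUnit (f : PowerSeries R) hf1
  have hleft : g.subst (f : PowerSeries R) = PowerSeries.X :=
    PowerSeries.subst_substInvOfIsUnit_left _ hf0 hf1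
  have hright : (f : PowerSeries R).subst y = PowerSeries.X :=
    (PowerSeries.subst_coe hys f).trans hy
  have hgy : g = y := by
    rw [← PowerSeries.X_subst g, ← hright, ← PowerSeries.subst_comp_subst_apply hfs hys, hleft,
      PowerSeries.subst_X hys]
  rw [← hgy, hleft]

theorem X_pow_dvd_trunc_derivative_comp (hy0 : PowerSeries.constantCoeff y = 0)
    (hy : aeval y f = PowerSeries.X) (n : ℕ) :
    X ^ n ∣ (PowerSeries.trunc n (PowerSeries.derivative R y)).comp f * derivative f - 1 := by
  have hf0 := coeff_zero_eq_zero_of_aeval_eq_X hy0 hy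
  have hfs : PowerSeries.HasSubst (f : PowerSeries R) :=
    .of_constantCoeff_zero' (by simpa using hf0)
  set T := PowerSeries.trunc n (PowerSeries.derivative R y)
  obtain ⟨S, hS⟩ : ∃ S, PowerSeries.derivative R y = PowerSeries.X ^ n * S + (T : PowerSeries R) :=
    ⟨_, PowerSeries.eq_X_pow_mul_shift_add_trunc n _⟩
  have hchain : (PowerSeries.derivative R y).subst (f : PowerSeries R) *
      (derivative f : R[X]) = 1 := by
    rw [← PowerSeries.derivative_coe, ← PowerSeries.derivative_subst hfs,
      subst_eq_X_of_aeval_eq_X hy0 hy, PowerSeries.derivative_X]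
  have hcomp : aeval (f : PowerSeries R) T = (T.comp f : R[X]) := by
    simpa [comp_eq_aeval] using aeval_algHom_apply (coeToPowerSeries.algHom R) f T
  have hexpand : ((f : PowerSeries R) ^ n * S.subst (f : PowerSeries R) + (T.comp f : R[X]))
      * (derivative f : R[X]) = 1 := by
    rw [← hchain, hS, PowerSeries.subst_add hfs, PowerSeries.subst_mul hfs,
      PowerSeries.subst_pow hfs, PowerSeries.subst_X hfs, PowerSeries.subst_coe hfs, hcomp]
  have hdvd : PowerSeries.X ^ n ∣ ((T.comp f * derivative f - 1 : R[X]) : PowerSeries R) := by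
    have hXf : (PowerSeries.X : PowerSeries R) ∣ (f : PowerSeries R) :=
      PowerSeries.X_dvd_iff.2 (by simpa using hf0)
    have heq : ((T.comp f * derivative f - 1 : R[X]) : PowerSeries R) =
        (f : PowerSeries R) ^ n * (-(S.subst (f : PowerSeries R)) * (derivative f : R[X])) := by
      push_cast
      linear_combination hexpand
    rw [heq]
    exact (pow_dvd_pow_of_dvd hXf n).mul_right _
  exact X_pow_dvd_iff.2 fun m hm => by
    rw [← coeff_coe]
    exact PowerSeries.X_pow_dvd_iff.1 hdvd m hm

end CompositionalInverse

section LagrangeInversion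

open Polynomial Metric

variable {f : ℂ[X]} {R : ℝ}

theorem eval_eq_mul_eval_divX {S : Type*} [CommSemiring S] {f : S[X]} (hf0 : f.coeff 0 = 0)
    (z : S) : f.eval z = z * f.divX.eval z := by
  conv_lhs => rw [← X_mul_divX_add f, hf0]
  simp

theorem eval_divX_ne_zero (hf0 : f.coeff 0 = 0) (hf1 : f.coeff 1 ≠ 0)
    (hne : ∀ z : ℂ, z ≠ 0 → ‖z‖ ≤ R → f.eval z ≠ 0) {z : ℂ} (hz : ‖z‖ ≤ R) :
    f.divX.eval z ≠ 0 := by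
  rcases eq_or_ne z 0 with rfl | hz0
  · rwa [← coeff_zero_eq_eval_zero, coeff_divX, zero_add]
  · exact right_ne_zero_of_mul (eval_eq_mul_eval_divX hf0 z ▸ hne z hz0 hz)

theorem circleIntegrable_eval_div_pow (hR : 0 ≤ R) (hf : ∀ z ∈ sphere (0 : ℂ) R, f.eval z ≠ 0)
    (g : ℂ[X]) (m : ℕ) : CircleIntegrable (fun z => g.eval z / f.eval z ^ m) 0 R :=
  ContinuousOn.circleIntegrable hR <| g.continuous.continuousOn.div
    (f.continuous.pow m).continuousOn fun z hz => pow_ne_zero _ (hf z hz)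

theorem circleIntegral_eval_div_pow_eq_zero (hR : 0 ≤ R)
    (hf : ∀ z ∈ closedBall (0 : ℂ) R, f.eval z ≠ 0) (g : ℂ[X]) (m : ℕ) :
    ∮ z in C(0, R), g.eval z / f.eval z ^ m = 0 := by
  have hdiff : ∀ z ∈ closedBall (0 : ℂ) R,
      DifferentiableAt ℂ (fun z => g.eval z / f.eval z ^ m) z := fun z hz =>
    g.differentiableAt.div (f.differentiableAt.pow m) (pow_ne_zero m (hf z hz))
  exact Complex.circleIntegral_eq_zero_of_differentiable_on_off_countable hR Set.countable_empty
    (fun z hz => (hdiff z hz).continuousAt.continuousWithinAt)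
    fun z hz => hdiff z (ball_subset_closedBall hz.1)

theorem circleIntegral_zpow_mul_derivative_of_ne (hR : 0 ≤ R)
    (hf : ∀ z ∈ sphere (0 : ℂ) R, f.eval z ≠ 0) {m : ℤ} (hm : m ≠ -1) :
    ∮ z in C(0, R), f.eval z ^ m * (derivative f).eval z = 0 := by
  refine circleIntegral.integral_eq_zero_of_hasDerivWithinAt
    (f := fun z => f.eval z ^ (m + 1) / (m + 1)) hR fun z hz => ?_
  have hm' : (m + 1 : ℂ) ≠ 0 := by exact_mod_cast fun h => hm (by omega)
  have hpow := (hasDerivAt_zpow (m + 1) (f.eval z) (.inl (hf z hz))).comp z (f.hasDerivAt z)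
  refine ((hpow.div_const (m + 1 : ℂ)).congr_deriv ?_).hasDerivWithinAt
  push_cast
  rw [add_sub_cancel_right]
  field_simp

theorem circleIntegral_derivative_div (hR : 0 < R) (hf0 : f.coeff 0 = 0) (hf1 : f.coeff 1 ≠ 0)
    (hne : ∀ z : ℂ, z ≠ 0 → ‖z‖ ≤ R → f.eval z ≠ 0) :
    ∮ z in C(0, R), (derivative f).eval z / f.eval z = 2 * Real.pi * Complex.I := by
  have hQ : ∀ z ∈ closedBall (0 : ℂ) R, f.divX.eval z ≠ 0 := fun z hz =>
    eval_divX_ne_zero hf0 hf1 hne (mem_closedBall_zero_iff.1 hz)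
  have hderiv : derivative f = f.divX + X * derivative f.divX := by
    conv_lhs => rw [← X_mul_divX_add f, hf0]
    simp
  have hsplit : Set.EqOn (fun z => (derivative f).eval z / f.eval z)
      (fun z => (z - 0)⁻¹ + (derivative f.divX).eval z / f.divX.eval z ^ 1) (sphere 0 R) := by
    intro z hz
    have hz0 : z ≠ 0 := ne_of_mem_sphere hz hR.ne'
    have hQz := hQ z (sphere_subset_closedBall hz)
    simp only [hderiv, eval_eq_mul_eval_divX hf0, eval_add, eval_mul, eval_X, sub_zero, pow_one]
    field_simp
  have hpole : CircleIntegrable (fun z : ℂ => (z - 0)⁻¹) 0 R :=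
    circleIntegrable_sub_inv_iff.2 (.inr (by simp [abs_of_pos hR, hR.ne]))
  rw [circleIntegral.integral_congr hR.le hsplit, circleIntegral.integral_add hpole
    (circleIntegrable_eval_div_pow hR.le (fun z hz => hQ z (sphere_subset_closedBall hz)) _ _),
    circleIntegral_eval_div_pow_eq_zero hR.le hQ, circleIntegral.integral_sub_center_inv 0 hR.ne',
    add_zero]

theorem circleIntegral_pow_mul_derivative_div_pow (hR : 0 < R) (hf0 : f.coeff 0 = 0)
    (hf1 : f.coeff 1 ≠ 0) (hne : ∀ z : ℂ, z ≠ 0 → ‖z‖ ≤ R → f.eval z ≠ 0) (k n : ℕ) :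
    ∮ z in C(0, R), f.eval z ^ k * (derivative f).eval z / f.eval z ^ (n + 1) =
      if k = n then 2 * Real.pi * Complex.I else 0 := by
  have hf : ∀ z ∈ sphere (0 : ℂ) R, f.eval z ≠ 0 := fun z hz =>
    hne z (ne_of_mem_sphere hz hR.ne') (mem_sphere_zero_iff_norm.1 hz).le
  split_ifs with hk
  · rw [← circleIntegral_derivative_div hR hf0 hf1 hne, hk]
    refine circleIntegral.integral_congr hR.le fun z hz => ?_
    rw [pow_succ]
    exact mul_div_mul_left _ _ (pow_ne_zero n (hf z hz))
  · have hm : (k : ℤ) - ((n + 1 : ℕ) : ℤ) ≠ -1 := by omega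
    refine Eq.trans (circleIntegral.integral_congr hR.le fun z hz => ?_)
      (circleIntegral_zpow_mul_derivative_of_ne hR.le hf hm)
    rw [zpow_sub₀ (hf z hz), zpow_natCast, zpow_natCast]
    ring

theorem circleIntegral_comp_mul_derivative_div_pow (hR : 0 < R) (hf0 : f.coeff 0 = 0)
    (hf1 : f.coeff 1 ≠ 0) (hne : ∀ z : ℂ, z ≠ 0 → ‖z‖ ≤ R → f.eval z ≠ 0) (P : ℂ[X]) (n : ℕ) :
    ∮ z in C(0, R), (P.comp f * derivative f).eval z / f.eval z ^ (n + 1) =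
      2 * Real.pi * Complex.I * P.coeff n := by
  have hf : ∀ z ∈ sphere (0 : ℂ) R, f.eval z ≠ 0 := fun z hz =>
    hne z (ne_of_mem_sphere hz hR.ne') (mem_sphere_zero_iff_norm.1 hz).le
  have hexpand (z : ℂ) : (P.comp f * derivative f).eval z / f.eval z ^ (n + 1) =
      ∑ k ∈ P.support, P.coeff k * (f.eval z ^ k * (derivative f).eval z / f.eval z ^ (n + 1)) := by
    rw [eval_mul, eval_comp, eval_eq_sum, Polynomial.sum, Finset.sum_mul, Finset.sum_div]
    exact Finset.sum_congr rfl fun k _ => by ring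
  have hint (k : ℕ) : CircleIntegrable
      (fun z => P.coeff k * (f.eval z ^ k * (derivative f).eval z / f.eval z ^ (n + 1))) 0 R := by
    simpa [mul_div_assoc, mul_assoc] using circleIntegrable_eval_div_pow hR.le hf
      (C (P.coeff k) * f ^ k * derivative f) (n + 1)
  simp only [hexpand]
  rw [circleIntegral.integral_fun_sum fun k _ => hint k]
  simp only [circleIntegral.integral_const_mul,
    circleIntegral_pow_mul_derivative_div_pow hR hf0 hf1 hne, mul_ite, mul_zero,
    Finset.sum_ite_eq', mem_support_iff]
  split_ifs with h
  · exact mul_comm _ _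
  · simp [not_not.1 h]

theorem circleIntegral_inv_pow_eq_coeff (hR : 0 < R) {y : PowerSeries ℂ}
    (hy0 : PowerSeries.constantCoeff y = 0) (hy : aeval y f = PowerSeries.X)
    (hne : ∀ z : ℂ, z ≠ 0 → ‖z‖ ≤ R → f.eval z ≠ 0) (n : ℕ) :
    ∮ z in C(0, R), (f.eval z ^ (n + 1))⁻¹ =
      2 * Real.pi * Complex.I * ((n + 1) * PowerSeries.coeff (n + 1) y) := by
  have hf0 := coeff_zero_eq_zero_of_aeval_eq_X hy0 hy
  have hf1 := (isUnit_coeff_one_of_aeval_eq_X hy0 hy).ne_zero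
  have hf : ∀ z ∈ sphere (0 : ℂ) R, f.eval z ≠ 0 := fun z hz =>
    hne z (ne_of_mem_sphere hz hR.ne') (mem_sphere_zero_iff_norm.1 hz).le
  have hQ : ∀ z ∈ closedBall (0 : ℂ) R, f.divX.eval z ≠ 0 := fun z hz =>
    eval_divX_ne_zero hf0 hf1 hne (mem_closedBall_zero_iff.1 hz)
  set T := PowerSeries.trunc (n + 1) (PowerSeries.derivative ℂ y) with hT
  obtain ⟨g, hg⟩ : X ^ (n + 1) ∣ T.comp f * derivative f - 1 :=
    X_pow_dvd_trunc_derivative_comp hy0 hy (n + 1)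
  have hsplit : Set.EqOn (fun z => (f.eval z ^ (n + 1))⁻¹)
      (fun z => (T.comp f * derivative f).eval z / f.eval z ^ (n + 1) -
        g.eval z / f.divX.eval z ^ (n + 1)) (sphere 0 R) := by
    intro z hz
    have hz0 : z ≠ 0 := ne_of_mem_sphere hz hR.ne'
    have hQz := hQ z (sphere_subset_closedBall hz)
    simp only [sub_eq_iff_eq_add'.1 hg, eval_add, eval_one, eval_mul, eval_pow, eval_X,
      eval_eq_mul_eval_divX hf0]
    field_simp
    ring
  have hcoeff : T.coeff n = (n + 1) * PowerSeries.coeff (n + 1) y := by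
    rw [hT, PowerSeries.coeff_trunc, if_pos n.lt_succ_self, PowerSeries.coeff_derivative, mul_comm]
  rw [circleIntegral.integral_congr hR.le hsplit, circleIntegral.integral_sub
    (circleIntegrable_eval_div_pow hR.le hf _ _)
    (circleIntegrable_eval_div_pow hR.le (fun z hz => hQ z (sphere_subset_closedBall hz)) _ _),
    circleIntegral_comp_mul_derivative_div_pow hR hf0 hf1 hne,
    circleIntegral_eval_div_pow_eq_zero hR.le hQ, sub_zero, hcoeff]

end LagrangeInversion

section Laplace

open Topology Asymptotics MeasureTheory

variable {g h : ℝ → ℂ} {a c δ : ℝ}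

theorem tendsto_div_sqrt_natCast (u : ℝ) : Tendsto (fun n : ℕ => u / √n) atTop (𝓝 0) :=
  tendsto_const_nhds.div_atTop (Real.tendsto_sqrt_atTop.comp tendsto_natCast_atTop_atTop)

theorem tendsto_comp_div_sqrt_pow
    (hexp : (fun θ : ℝ => h θ - (1 - a * θ ^ 2)) =o[𝓝 0] fun θ => θ ^ 2) (u : ℝ) :
    Tendsto (fun n : ℕ => h (u / √n) ^ n) atTop (𝓝 (Real.exp (-a * u ^ 2))) := by
  have hscale : ∀ᶠ n : ℕ in atTop, n * (u / √n) ^ 2 = u ^ 2 := by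
    filter_upwards [eventually_gt_atTop 0] with n hn
    have hn' : (0 : ℝ) < n := by exact_mod_cast hn
    rw [div_pow, Real.sq_sqrt hn'.le, mul_div_cancel₀ _ hn'.ne']
  have herror : Tendsto (fun n : ℕ => (n : ℂ) * (h (u / √n) - (1 - a * (u / √n : ℝ) ^ 2)))
      atTop (𝓝 0) := by
    have hmul := (isBigO_refl (fun n : ℕ => (n : ℂ)) atTop).norm_right.mul_isLittleO
      (hexp.comp_tendsto (tendsto_div_sqrt_natCast u))
    refine (isLittleO_one_iff ℝ).1 (hmul.trans_isBigO ?_)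
    refine (isBigO_const_const (u ^ 2) one_ne_zero atTop).congr' ?_ .rfl
    filter_upwards [hscale] with n hn
    simp [← hn]
  have hlim : Tendsto (fun n : ℕ => (n : ℂ) * (h (u / √n) - 1)) atTop (𝓝 (-a * u ^ 2 : ℝ)) := by
    have hadd := herror.add_const ((-a * u ^ 2 : ℝ) : ℂ)
    rw [zero_add] at hadd
    refine hadd.congr' ?_
    filter_upwards [hscale] with n hn
    rw [← hn]
    push_cast
    ring
  simpa using Complex.tendsto_one_add_pow_exp_of_tendsto hlim

theorem abs_div_sqrt_le {n : ℕ} (hn : n ≠ 0) {u : ℝ} (hu : |u| ≤ δ * √n) : |u / √n| ≤ δ := by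
  have hsn : 0 < √(n : ℝ) := Real.sqrt_pos.2 (by positivity)
  rwa [abs_div, abs_of_pos hsn, div_le_iff₀ hsn]

theorem norm_comp_div_sqrt_pow_le (hle : ∀ θ : ℝ, |θ| ≤ δ → ‖h θ‖ ≤ Real.exp (-c * θ ^ 2))
    {n : ℕ} (hn : n ≠ 0) {u : ℝ} (hu : |u| ≤ δ * √n) :
    ‖h (u / √n) ^ n‖ ≤ Real.exp (-c * u ^ 2) := by
  have hn' : (0 : ℝ) < n := by positivity
  calc ‖h (u / √n) ^ n‖ ≤ Real.exp (-c * (u / √n) ^ 2) ^ n := by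
        rw [norm_pow]
        gcongr
        exact hle _ (abs_div_sqrt_le hn hu)
    _ = Real.exp (-c * u ^ 2) := by
        rw [← Real.exp_nat_mul, div_pow, Real.sq_sqrt hn'.le]
        congr 1
        field_simp

theorem eventually_abs_lt_mul_sqrt (hδ : 0 < δ) (u : ℝ) : ∀ᶠ n : ℕ in atTop, |u| < δ * √n :=
  ((Real.tendsto_sqrt_atTop.comp tendsto_natCast_atTop_atTop).const_mul_atTop
    hδ).eventually_gt_atTop |u|

theorem le_of_isLittleO_of_norm_le (hδ : 0 < δ)
    (hle : ∀ θ : ℝ, |θ| ≤ δ → ‖h θ‖ ≤ Real.exp (-c * θ ^ 2))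
    (hexp : (fun θ : ℝ => h θ - (1 - a * θ ^ 2)) =o[𝓝 0] fun θ => θ ^ 2) : c ≤ a := by
  have hlim := (tendsto_comp_div_sqrt_pow hexp 1).norm
  have hexp_le : ‖(Real.exp (-a * 1 ^ 2) : ℂ)‖ ≤ Real.exp (-c * 1 ^ 2) := by
    refine le_of_tendsto hlim ?_
    filter_upwards [eventually_abs_lt_mul_sqrt hδ 1, eventually_ne_atTop 0] with n hn hn0
    exact norm_comp_div_sqrt_pow_le hle hn0 hn.le
  rw [Complex.norm_real, Real.norm_of_nonneg (Real.exp_nonneg _), Real.exp_le_exp] at hexp_le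
  linarith

theorem sqrt_mul_integral_eq_integral_indicator (g h : ℝ → ℂ) (hδ : 0 < δ) {n : ℕ} (hn : n ≠ 0) :
    √n * ∫ θ in -δ..δ, g θ * h θ ^ n =
      ∫ u, (Set.Ioc (-(δ * √n)) (δ * √n)).indicator (fun u => g (u / √n) * h (u / √n) ^ n) u := by
  have hsn : 0 < √(n : ℝ) := Real.sqrt_pos.2 (by positivity)
  rw [integral_indicator measurableSet_Ioc,
    ← intervalIntegral.integral_of_le (by linarith [mul_pos hδ hsn]),
    intervalIntegral.integral_comp_div (fun θ => g θ * h θ ^ n) hsn.ne', neg_div,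
    mul_div_cancel_right₀ _ hsn.ne', Complex.real_smul]

theorem tendsto_sqrt_mul_integral_mul_pow (hg : Continuous g) (hh : Continuous h) (hδ : 0 < δ)
    (hc : 0 < c) (hle : ∀ θ : ℝ, |θ| ≤ δ → ‖h θ‖ ≤ Real.exp (-c * θ ^ 2))
    (hexp : (fun θ : ℝ => h θ - (1 - a * θ ^ 2)) =o[𝓝 0] fun θ => θ ^ 2) :
    Tendsto (fun n : ℕ => √n * ∫ θ in -δ..δ, g θ * h θ ^ n) atTop
      (𝓝 (g 0 * √(Real.pi / a))) := by
  obtain ⟨M, hM⟩ := isCompact_Icc.exists_bound_of_continuousOn (s := Set.Icc (-δ) δ) hg.continuousOn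
  have hM0 : 0 ≤ M := (norm_nonneg _).trans (hM 0 ⟨by linarith, hδ.le⟩)
  have hgauss : g 0 * √(Real.pi / a) = ∫ u : ℝ, g 0 * Real.exp (-a * u ^ 2) := by
    rw [integral_const_mul, integral_complex_ofReal, integral_gaussian]
  rw [hgauss]
  refine Tendsto.congr' ((eventually_ne_atTop 0).mono fun n hn =>
    (sqrt_mul_integral_eq_integral_indicator g h hδ hn).symm) ?_
  refine tendsto_integral_filter_of_dominated_convergence (fun u => M * Real.exp (-c * u ^ 2))
    (.of_forall fun n => ?_) ((eventually_ne_atTop 0).mono fun n hn => .of_forall fun u => ?_)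
    ((integrable_exp_neg_mul_sq hc).const_mul M) (.of_forall fun u => ?_)
  · exact (Continuous.aestronglyMeasurable (by fun_prop)).indicator measurableSet_Ioc
  · rw [norm_indicator_eq_indicator_norm]
    refine Set.indicator_apply_le' (fun hu => ?_) fun _ => by positivity
    have hu' : |u| ≤ δ * √n := abs_le.2 ⟨hu.1.le, hu.2⟩
    rw [norm_mul]
    exact mul_le_mul (hM _ (abs_le.1 (abs_div_sqrt_le hn hu')))
      (norm_comp_div_sqrt_pow_le hle hn hu') (norm_nonneg _) hM0
  · have hlim : Tendsto (fun n : ℕ => g (u / √n) * h (u / √n) ^ n) atTop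
        (𝓝 (g 0 * Real.exp (-a * u ^ 2))) :=
      ((hg.tendsto 0).comp (tendsto_div_sqrt_natCast u)).mul (tendsto_comp_div_sqrt_pow hexp u)
    refine hlim.congr' ?_
    filter_upwards [eventually_abs_lt_mul_sqrt hδ u] with n hn
    have hu : u ∈ Set.Ioc (-(δ * √n)) (δ * √n) := ⟨(abs_lt.1 hn).1, (abs_lt.1 hn).2.le⟩
    exact (Set.indicator_of_mem hu (fun u => g (u / √n) * h (u / √n) ^ n)).symm

end Laplace

section CriticalPoint

open Polynomial Topology Asymptotics

theorem exists_eq_C_add_mul_sq_of_derivative_eval_eq_zero {R : Type*} [CommRing R] {f : R[X]}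
    {s : R} (hs : (derivative f).eval s = 0) :
    ∃ k : R[X], f = C (f.eval s) + k * (X - C s) ^ 2 ∧
      (derivative (derivative f)).eval s = 2 * k.eval s := by
  obtain ⟨k, hk⟩ := binomExpansion (f.map C) (C s) (X - C s)
  rw [add_sub_cancel, derivative_map, eval_map_apply, eval_map_apply, hs, C_0, zero_mul, add_zero,
    eval_map, eval₂_C_X] at hk
  refine ⟨k, hk, ?_⟩
  rw [hk]
  simp only [pow_two, derivative_add, derivative_C, derivative_mul, derivative_sub, derivative_X,
    sub_zero, one_mul, mul_one, zero_add, eval_add, eval_mul, eval_sub, eval_X, eval_C, sub_self,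
    mul_zero, add_zero, eval_one]
  ring

variable {f : ℝ[X]} {s : ℝ}

theorem aeval_ofReal_eq_ofReal_eval (f : ℝ[X]) (x : ℝ) :
    aeval (x : ℂ) f = ((f.eval x : ℝ) : ℂ) := by
  rw [← Complex.coe_algebraMap, aeval_algebraMap_apply, coe_aeval_eq_eval]

theorem exists_aeval_circleMap_eq_add_mul_sq (hs : (derivative f).eval s = 0) :
    ∃ ψ : ℝ → ℂ, ContinuousAt ψ 0 ∧
      ψ 0 = (-(s ^ 2 * (derivative (derivative f)).eval s / 2) : ℝ) ∧
      ∀ θ, aeval (circleMap 0 s θ) f = ((f.eval s : ℝ) : ℂ) + ψ θ * (θ : ℂ) ^ 2 := by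
  obtain ⟨k, hk, hk2⟩ := exists_eq_C_add_mul_sq_of_derivative_eval_eq_zero hs
  set w : ℝ → ℂ := circleMap 0 s with hw
  have hw0 : w 0 = s := by simp [hw, circleMap]
  have hwc : ContinuousAt w 0 := (continuous_circleMap 0 s).continuousAt
  have hwd : HasDerivAt w (s * Complex.I) 0 := by
    simpa [circleMap] using hasDerivAt_circleMap 0 s 0
  refine ⟨fun θ => aeval (w θ) k * dslope w 0 θ ^ 2,
    (k.continuous_aeval.continuousAt.comp hwc).mul
      ((continuousAt_dslope_same.2 hwd.differentiableAt).pow 2), ?_, fun θ => ?_⟩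
  · simp only [dslope_same, hwd.deriv, hw0, hk2, aeval_ofReal_eq_ofReal_eval, mul_pow,
      Complex.I_sq]
    push_cast
    ring
  · have hslope : (θ : ℂ) * dslope w 0 θ = w θ - s := by
      simpa [hw0] using sub_smul_dslope w 0 θ
    have htaylor : aeval (w θ) f = ((f.eval s : ℝ) : ℂ) + aeval (w θ) k * (w θ - s) ^ 2 := by
      simpa using congrArg (aeval (w θ)) hk
    rw [htaylor, ← hslope]
    ring

theorem isLittleO_eval_div_aeval_circleMap (hs : (derivative f).eval s = 0) (hfs : f.eval s ≠ 0) :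
    (fun θ : ℝ => ((f.eval s : ℝ) : ℂ) / aeval (circleMap 0 s θ) f -
      (1 - (-(s ^ 2 * (derivative (derivative f)).eval s / (2 * f.eval s)) : ℝ) * (θ : ℂ) ^ 2))
      =o[𝓝 0] fun θ => θ ^ 2 := by
  obtain ⟨ψ, hψc, hψ0, hf⟩ := exists_aeval_circleMap_eq_add_mul_sq hs
  have hf0 : aeval (circleMap 0 s 0) f = ((f.eval s : ℝ) : ℂ) := by simpa using hf 0
  have hfsC : ((f.eval s : ℝ) : ℂ) ≠ 0 := by exact_mod_cast hfs
  have hfc : ContinuousAt (fun θ => aeval (circleMap 0 s θ) f) 0 :=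
    (f.continuous_aeval.comp (continuous_circleMap 0 s)).continuousAt
  have hφ : Tendsto (fun θ => ψ θ / aeval (circleMap 0 s θ) f - ψ 0 / ((f.eval s : ℝ) : ℂ)) (𝓝 0)
      (𝓝 0) := by
    have h := (hψc.div hfc (hf0 ▸ hfsC)).tendsto.sub_const (ψ 0 / ((f.eval s : ℝ) : ℂ))
    simpa only [Pi.div_apply, hf0, sub_self] using h
  refine (((isLittleO_one_iff ℝ).2 hφ).neg_left.mul_isBigO (Complex.isBigO_ofReal_left.2
    (isBigO_refl (fun θ : ℝ => θ ^ 2) (𝓝 0)))).congr' ?_ (by simp)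
  filter_upwards [hfc.eventually_ne (hf0 ▸ hfsC)] with θ hθ
  have hquot : ((f.eval s : ℝ) : ℂ) / aeval (circleMap 0 s θ) f =
      1 - ψ θ / aeval (circleMap 0 s θ) f * (θ : ℂ) ^ 2 := by
    rw [div_eq_iff hθ, sub_mul, one_mul, mul_right_comm, div_mul_cancel₀ _ hθ, hf]
    ring
  rw [hquot, hψ0]
  push_cast
  ring

end CriticalPoint

section CoefficientAsymptotics

open Polynomial Topology

theorem intervalIntegral_zero_two_pi_eq_mul_of_periodic {G : ℝ → ℂ} {r : ℕ} (hr : r ≠ 0)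
    (hG : Function.Periodic G (2 * Real.pi / r)) (hc : Continuous G) :
    ∫ θ in (0 : ℝ)..2 * Real.pi, G θ = r * ∫ θ in -(Real.pi / r)..Real.pi / r, G θ := by
  have hr' : (r : ℝ) ≠ 0 := Nat.cast_ne_zero.2 hr
  have hper := hG.intervalIntegral_add_zsmul_eq r 0 fun a b => hc.intervalIntegrable a b
  rw [hG.intervalIntegral_add_eq 0 (-(Real.pi / r))] at hper
  have hfull : (0 : ℝ) + (r : ℤ) • (2 * Real.pi / r) = 2 * Real.pi := by
    rw [zsmul_eq_mul, zero_add, Int.cast_natCast, mul_div_cancel₀ _ hr']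
  have hone : -(Real.pi / r) + 2 * Real.pi / r = Real.pi / r := by ring
  rw [hfull, hone, zsmul_eq_mul] at hper
  exact_mod_cast hper

theorem periodic_exp_mul_div_comp_circleMap_pow {F : ℂ → ℂ} {r : ℕ} (hr : r ≠ 0)
    (hF : ∀ w z : ℂ, w ^ r = 1 → F (w * z) = w * F z) (s : ℝ) (b : ℂ) (m : ℕ) :
    Function.Periodic (fun θ : ℝ => Complex.exp (θ * Complex.I) *
      (b / F (circleMap 0 s θ)) ^ (m * r + 1)) (2 * Real.pi / r) := by
  intro θ
  set w : ℂ := Complex.exp ((2 * Real.pi / r : ℝ) * Complex.I) with hw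
  have hw0 : w ≠ 0 := Complex.exp_ne_zero _
  have hw1 : w ^ r = 1 := by
    have hr' : (r : ℂ) ≠ 0 := Nat.cast_ne_zero.2 hr
    rw [hw, ← Complex.exp_nat_mul, ← Complex.exp_two_pi_mul_I]
    congr 1
    push_cast
    field_simp
  have hexp : Complex.exp ((θ + 2 * Real.pi / r : ℝ) * Complex.I) =
      w * Complex.exp (θ * Complex.I) := by
    rw [hw, ← Complex.exp_add, ← add_mul, add_comm, Complex.ofReal_add]
  have hwn : w ^ (m * r + 1) = w := by rw [pow_succ, mul_comm m, pow_mul, hw1, one_pow, one_mul]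
  simp only [circleMap_zero, hexp]
  rw [mul_left_comm (s : ℂ), hF _ _ hw1, mul_comm w (F _), ← div_div, div_pow _ w, hwn]
  field_simp

theorem mul_sqrt_div_sqrt_mul_sqrt_pi_div_eq_one {s b D : ℝ} (hs : 0 < s) (hb : 0 < b)
    (hD : D < 0) :
    s / (2 * Real.pi) * (√(-(2 * Real.pi * D)) / √b) * √(Real.pi / -(s ^ 2 * D / (2 * b))) = 1 := by
  have hpi := Real.pi_pos
  have hE : 0 < -(2 * Real.pi * D) := by nlinarith [mul_pos hpi (neg_pos.2 hD)]
  have harg : Real.pi / -(s ^ 2 * D / (2 * b)) =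
      (2 * Real.pi / s) ^ 2 * (b / -(2 * Real.pi * D)) := by
    have := hD.ne
    field_simp
  rw [harg, Real.sqrt_mul (by positivity), Real.sqrt_div hb.le, Real.sqrt_sq (by positivity)]
  field_simp

theorem mul_rpow_mul_rpow_eq_of_two_pi_mul_eq {a b s r A : ℝ} {n : ℕ} (E : ℝ) (hb : 0 < b)
    (hr : r ≠ 0) (hn : n ≠ 0) (h : 2 * Real.pi * (n * a) * b ^ n = s * (r * A)) :
    a * (n : ℝ) ^ ((3 : ℝ) / 2) * b ^ ((n : ℝ) - 1 / 2) * E / r =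
      s / (2 * Real.pi) * (E / √b) * (√n * A) := by
  have hn' : (0 : ℝ) < n := Nat.cast_pos.2 hn.bot_lt
  have hn32 : (n : ℝ) ^ ((3 : ℝ) / 2) = n * √n := by
    rw [Real.sqrt_eq_rpow, show (3 : ℝ) / 2 = 1 + 1 / 2 by norm_num, Real.rpow_add hn',
      Real.rpow_one]
  have hbn : b ^ ((n : ℝ) - 1 / 2) = b ^ n / √b := by
    rw [Real.rpow_sub hb, Real.rpow_natCast, Real.sqrt_eq_rpow]
  rw [hn32, hbn]
  field_simp
  linear_combination E * h

variable {f : ℝ[X]} {s : ℝ} {y : PowerSeries ℝ}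

theorem aeval_circleMap_ne_zero (hs : 0 < s) (hne : ∀ z : ℂ, z ≠ 0 → ‖z‖ ≤ s → aeval z f ≠ 0)
    (θ : ℝ) : aeval (circleMap 0 s θ) f ≠ 0 :=
  hne _ (circleMap_ne_center hs.ne') (norm_circleMap_zero s θ ▸ (abs_of_pos hs).le)

theorem continuous_eval_div_aeval_circleMap (hs : 0 < s)
    (hne : ∀ z : ℂ, z ≠ 0 → ‖z‖ ≤ s → aeval z f ≠ 0) :
    Continuous fun θ : ℝ => ((f.eval s : ℝ) : ℂ) / aeval (circleMap 0 s θ) f :=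
  continuous_const.div (f.continuous_aeval.comp (continuous_circleMap 0 s))
    (aeval_circleMap_ne_zero hs hne)

theorem two_pi_mul_coeff_mul_eval_pow_eq_integral (hs : 0 < s)
    (hy0 : PowerSeries.constantCoeff y = 0) (hy : aeval y f = PowerSeries.X)
    (hne : ∀ z : ℂ, z ≠ 0 → ‖z‖ ≤ s → aeval z f ≠ 0) (n : ℕ) :
    ((2 * Real.pi * ((n + 1 : ℕ) * PowerSeries.coeff (n + 1) y) * f.eval s ^ (n + 1) : ℝ) : ℂ) =
      s * ∫ θ in (0 : ℝ)..2 * Real.pi, Complex.exp (θ * Complex.I) *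
        (((f.eval s : ℝ) : ℂ) / aeval (circleMap 0 s θ) f) ^ (n + 1) := by
  have hfs : ((f.eval s : ℝ) : ℂ) ≠ 0 := by
    rw [← aeval_ofReal_eq_ofReal_eval]
    exact hne s (by exact_mod_cast hs.ne') (by rw [Complex.norm_of_nonneg hs.le])
  have hyC : aeval (PowerSeries.map (algebraMap ℝ ℂ) y) (f.map (algebraMap ℝ ℂ)) =
      PowerSeries.X := by
    rw [← map_aeval_eq_aeval_map (by ext; simp), hy, PowerSeries.map_X]
  have hcoeff := circleIntegral_inv_pow_eq_coeff (f := f.map (algebraMap ℝ ℂ)) hs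
    (constantCoeff_map_eq_zero _ hy0) hyC
    (fun z => by simpa only [eval_map_algebraMap] using hne z) n
  rw [circleIntegral] at hcoeff
  have hint : ∀ θ : ℝ, deriv (circleMap 0 s) θ •
      (((f.map (algebraMap ℝ ℂ)).eval (circleMap 0 s θ)) ^ (n + 1))⁻¹ =
      (s * Complex.I * (((f.eval s : ℝ) : ℂ) ^ (n + 1))⁻¹) * (Complex.exp (θ * Complex.I) *
        (((f.eval s : ℝ) : ℂ) / aeval (circleMap 0 s θ) f) ^ (n + 1)) := by
    intro θ
    rw [deriv_circleMap, eval_map_algebraMap, smul_eq_mul, div_pow, circleMap_zero]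
    field_simp
  simp only [hint, intervalIntegral.integral_const_mul, PowerSeries.coeff_map,
    Complex.coe_algebraMap] at hcoeff
  push_cast
  have hI := Complex.I_ne_zero
  generalize (∫ θ in (0 : ℝ)..2 * Real.pi, Complex.exp (θ * Complex.I) *
    (((f.eval s : ℝ) : ℂ) / aeval (circleMap 0 s θ) f) ^ (n + 1)) = J at hcoeff ⊢
  field_simp at hcoeff
  linear_combination -hcoeff

theorem two_pi_mul_coeff_mul_eval_pow_eq_mul_integral_sector (hs : 0 < s)
    (hy0 : PowerSeries.constantCoeff y = 0) (hy : aeval y f = PowerSeries.X)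
    (hne : ∀ z : ℂ, z ≠ 0 → ‖z‖ ≤ s → aeval z f ≠ 0) {r : ℕ} (hr : r ≠ 0)
    (hrot : ∀ w z : ℂ, w ^ r = 1 → aeval (w * z) f = w * aeval z f) (m : ℕ) :
    ((2 * Real.pi * ((m * r + 1 : ℕ) * PowerSeries.coeff (m * r + 1) y) *
      f.eval s ^ (m * r + 1) : ℝ) : ℂ) =
      s * (r * ∫ θ in -(Real.pi / r)..Real.pi / r, Complex.exp (θ * Complex.I) *
        (((f.eval s : ℝ) : ℂ) / aeval (circleMap 0 s θ) f) ^ (m * r + 1)) := by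
  rw [two_pi_mul_coeff_mul_eval_pow_eq_integral hs hy0 hy hne,
    intervalIntegral_zero_two_pi_eq_mul_of_periodic hr
      (periodic_exp_mul_div_comp_circleMap_pow (F := fun z => aeval z f) hr hrot s _ m)]
  exact (by fun_prop : Continuous fun θ : ℝ => Complex.exp (θ * Complex.I)).mul
    ((continuous_eval_div_aeval_circleMap hs hne).pow _)

theorem tendsto_coeff_mul_rpow_of_norm_aeval_circleMap_le {r : ℕ} {c : ℝ} (hs : 0 < s)
    (hy0 : PowerSeries.constantCoeff y = 0) (hy : aeval y f = PowerSeries.X)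
    (hcrit : (derivative f).eval s = 0) (hfs : 0 < f.eval s)
    (hne : ∀ z : ℂ, z ≠ 0 → ‖z‖ ≤ s → aeval z f ≠ 0) (hr : r ≠ 0)
    (hrot : ∀ w z : ℂ, w ^ r = 1 → aeval (w * z) f = w * aeval z f) (hc : 0 < c)
    (hbound : ∀ θ : ℝ, |θ| ≤ Real.pi / r →
      f.eval s ≤ ‖aeval (circleMap 0 s θ) f‖ * Real.exp (-c * θ ^ 2)) :
    Tendsto (fun m : ℕ => PowerSeries.coeff (m * r + 1) y *
      ((m * r + 1 : ℕ) : ℝ) ^ ((3 : ℝ) / 2) * f.eval s ^ (((m * r + 1 : ℕ) : ℝ) - 1 / 2) *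
      √(-(2 * Real.pi * (derivative (derivative f)).eval s)) / r) atTop (𝓝 1) := by
  have hδ : 0 < Real.pi / r := div_pos Real.pi_pos (Nat.cast_pos.2 hr.bot_lt)
  have hnorm (θ : ℝ) (hθ : |θ| ≤ Real.pi / r) :
      ‖((f.eval s : ℝ) : ℂ) / aeval (circleMap 0 s θ) f‖ ≤ Real.exp (-c * θ ^ 2) := by
    rw [norm_div, Complex.norm_of_nonneg hfs.le,
      div_le_iff₀' (norm_pos_iff.2 (aeval_circleMap_ne_zero hs hne θ))]
    exact hbound θ hθ
  have hexp := isLittleO_eval_div_aeval_circleMap hcrit hfs.ne'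
  have hD : (derivative (derivative f)).eval s < 0 := by
    have hpos := hc.trans_le (le_of_isLittleO_of_norm_le hδ hnorm hexp)
    by_contra! hD
    have : 0 ≤ s ^ 2 * (derivative (derivative f)).eval s / (2 * f.eval s) := by positivity
    linarith
  have hlaplace := (tendsto_sqrt_mul_integral_mul_pow
    (g := fun θ => Complex.exp (θ * Complex.I)) (by fun_prop)
    (continuous_eval_div_aeval_circleMap hs hne) hδ hc hnorm hexp).comp
    (tendsto_atTop_mono (fun m => (Nat.le_mul_of_pos_right m hr.bot_lt).trans (Nat.le_succ _))
      tendsto_id : Tendsto (fun m => m * r + 1) atTop atTop)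
  have hlim := ((Complex.continuous_re.tendsto _).comp hlaplace).const_mul
    (s / (2 * Real.pi) * (√(-(2 * Real.pi * (derivative (derivative f)).eval s)) / √(f.eval s)))
  simp only [Complex.ofReal_zero, zero_mul, Complex.exp_zero, one_mul, Complex.ofReal_re,
    mul_sqrt_div_sqrt_mul_sqrt_pi_div_eq_one hs hfs hD] at hlim
  refine hlim.congr fun m => ?_
  have hcoeff := congrArg Complex.re
    (two_pi_mul_coeff_mul_eval_pow_eq_mul_integral_sector hs hy0 hy hne hr hrot m)
  rw [Complex.ofReal_re, Complex.re_ofReal_mul, ← Complex.ofReal_natCast r,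
    Complex.re_ofReal_mul] at hcoeff
  rw [mul_rpow_mul_rpow_eq_of_two_pi_mul_eq _ hfs (Nat.cast_ne_zero.2 hr) (Nat.succ_ne_zero _)
    hcoeff]
  simp only [Function.comp_apply, Complex.re_ofReal_mul]

end CoefficientAsymptotics

section CosineBound

theorem norm_sq_one_sub_mul_exp (τ ψ : ℝ) :
    ‖1 - (τ : ℂ) * Complex.exp (ψ * Complex.I)‖ ^ 2 =
      (1 - τ) ^ 2 + 2 * τ * (1 - Real.cos ψ) := by
  rw [← Complex.normSq_eq_norm_sq, Complex.exp_mul_I, ← Complex.ofReal_cos, ← Complex.ofReal_sin,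
    Complex.normSq_apply]
  simp only [Complex.sub_re, Complex.sub_im, Complex.one_re, Complex.one_im, Complex.re_ofReal_mul,
    Complex.im_ofReal_mul, Complex.add_re, Complex.add_im, Complex.ofReal_re, Complex.ofReal_im,
    Complex.mul_I_re, Complex.mul_I_im]
  linear_combination τ ^ 2 * Real.sin_sq_add_cos_sq ψ

theorem one_sub_le_norm_one_sub_mul_exp {τ ψ : ℝ} (hτ0 : 0 ≤ τ) (hτ1 : τ ≤ 1)
    (hψ : |ψ| ≤ Real.pi) :
    1 - τ ≤ ‖1 - (τ : ℂ) * Complex.exp (ψ * Complex.I)‖ *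
      Real.exp (-(τ * ψ ^ 2 / (2 * Real.pi ^ 2))) := by
  set N := ‖1 - (τ : ℂ) * Complex.exp (ψ * Complex.I)‖
  set u := τ * ψ ^ 2 / Real.pi ^ 2 with hu
  have hN : N ^ 2 = (1 - τ) ^ 2 + 2 * τ * (1 - Real.cos ψ) := norm_sq_one_sub_mul_exp τ ψ
  have hN4 : N ^ 2 ≤ 4 := by nlinarith [Real.neg_one_le_cos ψ]
  have hcos : 4 * u ≤ 2 * τ * (1 - Real.cos ψ) := by
    have h := mul_le_mul_of_nonneg_left (Real.cos_le_one_sub_mul_cos_sq hψ) hτ0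
    have : τ * (2 / Real.pi ^ 2 * ψ ^ 2) = 2 * u := by rw [hu]; ring
    linarith
  have hexp : Real.exp (-(τ * ψ ^ 2 / (2 * Real.pi ^ 2))) ^ 2 = Real.exp (-u) := by
    rw [← Real.exp_nat_mul, hu]
    congr 1
    push_cast
    ring
  refine le_of_sq_le_sq ?_ (by positivity)
  calc (1 - τ) ^ 2 ≤ N ^ 2 - 4 * u := by linarith
    _ ≤ N ^ 2 * (-u + 1) := by nlinarith [show 0 ≤ u by positivity]
    _ ≤ N ^ 2 * Real.exp (-u) := mul_le_mul_of_nonneg_left (Real.add_one_le_exp _) (sq_nonneg N)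
    _ = (N * Real.exp (-(τ * ψ ^ 2 / (2 * Real.pi ^ 2)))) ^ 2 := by rw [mul_pow, hexp]

end CosineBound

section PartitionPolynomial

open Polynomial Topology

/-- The polynomial `q_{d,p}`, whose compositional inverse is the generating function of the `p`-ary
orthogonal partitions of the `d`-dimensional cube. -/
noncomputable def partitionPoly (p d : ℕ) : ℝ[X] :=
  ∑ k ∈ Finset.range (d + 1), (-1) ^ k * (d.choose k : ℝ[X]) * X ^ p ^ k

/-- The quotient `q_{d,p}(z ^ p) / q_{d,p}(z)`, which measures the passage from `q_{d,p}` to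
`q_{d+1,p}`: away from the zeros of `q_{d,p}`, `q_{d+1,p} = q_{d,p} * (1 - partitionRatio p d)`.
Division by zero makes its value at `0` equal to `0`, which is also its limit there. -/
noncomputable def partitionRatio (p d : ℕ) (z : ℂ) : ℂ :=
  aeval (z ^ p) (partitionPoly p d) / aeval z (partitionPoly p d)

theorem partitionPoly_zero (p : ℕ) : partitionPoly p 0 = X := by
  simp [partitionPoly]

theorem partitionPoly_succ (p d : ℕ) :
    partitionPoly p (d + 1) = partitionPoly p d - expand ℝ p (partitionPoly p d) := by
  have hexpand : expand ℝ p (partitionPoly p d) =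
      ∑ k ∈ Finset.range (d + 1), (-1) ^ k * (d.choose k : ℝ[X]) * X ^ p ^ (k + 1) := by
    simp only [partitionPoly, map_sum, map_mul, map_pow, map_neg, map_one, map_natCast, expand_X,
      ← pow_mul, ← pow_succ']
  have hshift : partitionPoly p d =
      ∑ k ∈ Finset.range (d + 1), (-1) ^ (k + 1) * (d.choose (k + 1) : ℝ[X]) * X ^ p ^ (k + 1) +
        X := by
    rw [partitionPoly, Finset.sum_range_succ', Finset.sum_range_succ _ d]
    simp
  rw [hexpand, hshift, partitionPoly, Finset.sum_range_succ' _ (d + 1), add_sub_right_comm,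
    ← Finset.sum_sub_distrib]
  congr 1
  · refine Finset.sum_congr rfl fun k _ => ?_
    rw [Nat.choose_succ_succ, Nat.cast_add]
    ring
  · simp

variable {p d : ℕ}

theorem aeval_partitionPoly_succ {A : Type*} [CommRing A] [Algebra ℝ A] (z : A) :
    aeval z (partitionPoly p (d + 1)) =
      aeval z (partitionPoly p d) - aeval (z ^ p) (partitionPoly p d) := by
  rw [partitionPoly_succ, map_sub, expand_aeval]

theorem eval_partitionPoly_succ (x : ℝ) : (partitionPoly p (d + 1)).eval x =
    (partitionPoly p d).eval x - (partitionPoly p d).eval (x ^ p) := by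
  simpa only [coe_aeval_eq_eval] using aeval_partitionPoly_succ x

theorem eval_partitionPoly_zero_right (hp : p ≠ 0) : (partitionPoly p d).eval 0 = 0 := by
  simp [partitionPoly, eval_finsetSum, hp]

theorem eval_partitionPoly_one (hd : d ≠ 0) : (partitionPoly p d).eval 1 = 0 := by
  obtain ⟨d, rfl⟩ := Nat.exists_eq_succ_of_ne_zero hd
  rw [eval_partitionPoly_succ, one_pow, sub_self]

theorem derivative_partitionPoly_eval_zero (hp : 2 ≤ p) :
    (derivative (partitionPoly p d)).eval 0 = 1 := by
  induction d with
  | zero => simp [partitionPoly_zero]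
  | succ d ih =>
    rw [partitionPoly_succ, derivative_sub, derivative_expand, eval_sub, ih]
    simp [show p - 1 ≠ 0 by omega]

theorem aeval_partitionPoly_mul {A : Type*} [CommRing A] [Algebra ℝ A] (hp : p ≠ 0) {w : A}
    (hw : w ^ (p - 1) = 1) (z : A) :
    aeval (w * z) (partitionPoly p d) = w * aeval z (partitionPoly p d) := by
  have hwp : w ^ p = w := by rw [← mul_pow_sub_one hp, hw, mul_one]
  induction d generalizing z with
  | zero => simp [partitionPoly_zero]
  | succ d ih =>
    rw [aeval_partitionPoly_succ, aeval_partitionPoly_succ, mul_pow, hwp, ih, ih, mul_sub]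

variable {t : ℝ}

theorem eval_partitionPoly_pos_of_succ (hp : 2 ≤ p) (ht : t < 1)
    (hpos : ∀ x ∈ Set.Ioc 0 t, 0 < (partitionPoly p (d + 1)).eval x) :
    ∀ x ∈ Set.Ioc 0 t, 0 < (partitionPoly p d).eval x := by
  intro x hx
  have hx1 : x < 1 := hx.2.trans_lt ht
  have hpow_mem (i : ℕ) : x ^ p ^ i ∈ Set.Ioc 0 t :=
    ⟨pow_pos hx.1 _, (pow_le_of_le_one hx.1.le hx1.le (by positivity)).trans hx.2⟩
  have hanti : StrictAnti fun i : ℕ => (partitionPoly p d).eval (x ^ p ^ i) := by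
    refine strictAnti_nat_of_succ_lt fun i => ?_
    have hi := hpos _ (hpow_mem i)
    rwa [eval_partitionPoly_succ, sub_pos, ← pow_mul, ← pow_succ] at hi
  have hlim : Tendsto (fun i : ℕ => (partitionPoly p d).eval (x ^ p ^ i)) atTop (𝓝 0) := by
    rw [← eval_partitionPoly_zero_right (p := p) (d := d) (by omega)]
    exact ((partitionPoly p d).continuous.tendsto 0).comp
      ((tendsto_pow_atTop_nhds_zero_of_lt_one hx.1.le hx1).comp
        (tendsto_pow_atTop_atTop_of_one_lt hp))
  have h := (hanti.antitone.le_of_tendsto hlim 1).trans_lt (hanti Nat.zero_lt_one)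
  simpa using h

theorem aeval_partitionPoly_succ_eq_mul {z : ℂ} (hz : aeval z (partitionPoly p d) ≠ 0) :
    aeval z (partitionPoly p (d + 1)) =
      aeval z (partitionPoly p d) * (1 - partitionRatio p d z) := by
  rw [aeval_partitionPoly_succ, partitionRatio, mul_sub, mul_div_cancel₀ _ hz, mul_one]

theorem partitionRatio_zero_right (hp : p ≠ 0) : partitionRatio p d 0 = 0 := by
  have h : aeval (0 : ℂ) (partitionPoly p d) = 0 := by
    simpa [eval_partitionPoly_zero_right hp] using aeval_ofReal_eq_ofReal_eval (partitionPoly p d) 0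
  rw [partitionRatio, h, div_zero]

theorem partitionRatio_succ {z : ℂ} (hz : aeval z (partitionPoly p d) ≠ 0)
    (hzp : aeval (z ^ p) (partitionPoly p d) ≠ 0) :
    partitionRatio p (d + 1) z =
      partitionRatio p d z * ((1 - partitionRatio p d (z ^ p)) / (1 - partitionRatio p d z)) := by
  rw [partitionRatio, aeval_partitionPoly_succ_eq_mul hz, aeval_partitionPoly_succ_eq_mul hzp,
    mul_div_mul_comm, ← partitionRatio]

theorem norm_partitionRatio_ofReal (hp : p ≠ 0) (ht0 : 0 < t) (ht1 : t < 1)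
    (hpos : ∀ x ∈ Set.Ioc 0 t, 0 < (partitionPoly p d).eval x) :
    ‖partitionRatio p d t‖ = (partitionPoly p d).eval (t ^ p) / (partitionPoly p d).eval t := by
  have htp : t ^ p ∈ Set.Ioc 0 t := ⟨pow_pos ht0 p, pow_le_of_le_one ht0.le ht1.le hp⟩
  rw [partitionRatio, ← Complex.ofReal_pow, aeval_ofReal_eq_ofReal_eval,
    aeval_ofReal_eq_ofReal_eval, norm_div, Complex.norm_of_nonneg (hpos _ htp).le,
    Complex.norm_of_nonneg (hpos _ ⟨ht0, le_rfl⟩).le]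

theorem eval_partitionPoly_succ_eq_mul (hp : p ≠ 0) (ht0 : 0 < t) (ht1 : t < 1)
    (hpos : ∀ x ∈ Set.Ioc 0 t, 0 < (partitionPoly p d).eval x) :
    (partitionPoly p (d + 1)).eval t =
      (partitionPoly p d).eval t * (1 - ‖partitionRatio p d t‖) := by
  rw [norm_partitionRatio_ofReal hp ht0 ht1 hpos, eval_partitionPoly_succ, mul_sub,
    mul_div_cancel₀ _ (hpos t ⟨ht0, le_rfl⟩).ne', mul_one]

theorem norm_partitionRatio_lt_one (hp : 2 ≤ p) (ht0 : 0 < t) (ht1 : t < 1)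
    (hpos : ∀ x ∈ Set.Ioc 0 t, 0 < (partitionPoly p (d + 1)).eval x) :
    ‖partitionRatio p d t‖ < 1 := by
  have hpos' := eval_partitionPoly_pos_of_succ hp ht1 hpos
  have h := hpos t ⟨ht0, le_rfl⟩
  rw [eval_partitionPoly_succ_eq_mul (by omega) ht0 ht1 hpos'] at h
  exact sub_pos.1 (pos_of_mul_pos_right h (hpos' t ⟨ht0, le_rfl⟩).le)

theorem aeval_partitionPoly_ne_zero_and_partitionRatio_mem_natSeriesOn (hp : 2 ≤ p)
    (ht0 : 0 < t) (ht1 : t < 1)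
    (hpos : ∀ x ∈ Set.Ioc 0 t, 0 < (partitionPoly p d).eval x) :
    (∀ z : ℂ, z ≠ 0 → ‖z‖ ≤ t → aeval z (partitionPoly p d) ≠ 0) ∧
      partitionRatio p d ∈ natSeriesOn t := by
  have hp0 : p ≠ 0 := by omega
  induction d with
  | zero =>
    simp only [partitionPoly_zero, aeval_X]
    refine ⟨fun z hz _ => hz, natSeriesOn_congr (pow_mem (id_mem_natSeriesOn t) (p - 1)) ?_⟩
    intro z _
    rcases eq_or_ne z 0 with rfl | hz
    · simp [partitionRatio_zero_right hp0, show p - 1 ≠ 0 by omega]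
    · simp [partitionRatio, partitionPoly_zero, eq_div_iff hz, pow_sub_one_mul hp0]
  | succ d ih =>
    obtain ⟨hne, hmem⟩ := ih (eval_partitionPoly_pos_of_succ hp ht1 hpos)
    have hlt := norm_partitionRatio_lt_one hp ht0 ht1 hpos
    refine ⟨fun z hz hzt => ?_, natSeriesOn_congr (mul_mem hmem
      (one_sub_comp_pow_div_one_sub_mem_natSeriesOn hp0 ht0.le ht1.le hmem hlt)) fun z hzt => ?_⟩
    · rw [aeval_partitionPoly_succ_eq_mul (hne z hz hzt)]
      refine mul_ne_zero (hne z hz hzt) (sub_ne_zero.2 fun h => ?_)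
      have hle := norm_le_of_mem_natSeriesOn hmem hzt
      rw [← h, norm_one] at hle
      exact hle.not_gt hlt
    · rcases eq_or_ne z 0 with rfl | hz
      · simp [partitionRatio_zero_right hp0]
      · have hzp : ‖z ^ p‖ ≤ t := by
          rw [norm_pow]
          exact (pow_le_of_le_one (norm_nonneg z) (hzt.trans ht1.le) hp0).trans hzt
        exact (partitionRatio_succ (hne z hz hzt) (hne _ (pow_ne_zero p hz) hzp)).symm

theorem eval_partitionPoly_succ_mul_norm_le (hp : 2 ≤ p) (ht0 : 0 < t) (ht1 : t < 1)
    (hpos : ∀ x ∈ Set.Ioc 0 t, 0 < (partitionPoly p (d + 1)).eval x) {z : ℂ} (hz : z ≠ 0)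
    (hzt : ‖z‖ ≤ t) :
    (partitionPoly p (d + 1)).eval t * ‖aeval z (partitionPoly p d)‖ ≤
      ‖aeval z (partitionPoly p (d + 1))‖ * (partitionPoly p d).eval t := by
  have hpos' := eval_partitionPoly_pos_of_succ hp ht1 hpos
  obtain ⟨hne, hmem⟩ :=
    aeval_partitionPoly_ne_zero_and_partitionRatio_mem_natSeriesOn hp ht0 ht1 hpos'
  have hratio : 1 - ‖partitionRatio p d t‖ ≤ ‖1 - partitionRatio p d z‖ := by
    have h := norm_sub_norm_le (1 : ℂ) (partitionRatio p d z)
    rw [norm_one] at h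
    linarith [norm_le_of_mem_natSeriesOn hmem hzt]
  rw [eval_partitionPoly_succ_eq_mul (by omega) ht0 ht1 hpos',
    aeval_partitionPoly_succ_eq_mul (hne z hz hzt), norm_mul]
  have := mul_le_mul_of_nonneg_left hratio
    (mul_nonneg (hpos' t ⟨ht0, le_rfl⟩).le (norm_nonneg (aeval z (partitionPoly p d))))
  linarith

theorem eval_partitionPoly_succ_mul_norm_one_sub_pow_le (hp : 2 ≤ p) (ht0 : 0 < t) (ht1 : t < 1)
    (hpos : ∀ x ∈ Set.Ioc 0 t, 0 < (partitionPoly p (d + 1)).eval x) {z : ℂ} (hzt : ‖z‖ = t) :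
    (partitionPoly p (d + 1)).eval t * ‖1 - z ^ (p - 1)‖ ≤
      ‖aeval z (partitionPoly p (d + 1))‖ * (1 - t ^ (p - 1)) := by
  have hp0 : p ≠ 0 := by omega
  induction d with
  | zero =>
    rw [eval_partitionPoly_succ, aeval_partitionPoly_succ, partitionPoly_zero]
    simp only [aeval_X, eval_X]
    rw [← mul_pow_sub_one hp0 t, ← mul_pow_sub_one hp0 z, ← mul_one_sub, ← mul_one_sub, norm_mul,
      hzt]
    linarith
  | succ d ih =>
    have hpos' := eval_partitionPoly_pos_of_succ hp ht1 hpos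
    have hz : z ≠ 0 := norm_pos_iff.1 (hzt ▸ ht0)
    have hτ : 0 ≤ 1 - t ^ (p - 1) := sub_nonneg.2 (pow_le_one₀ ht0.le ht1.le)
    refine le_of_mul_le_mul_right ?_ (hpos' t ⟨ht0, le_rfl⟩)
    calc (partitionPoly p (d + 1 + 1)).eval t * ‖1 - z ^ (p - 1)‖ * (partitionPoly p (d + 1)).eval t
        = (partitionPoly p (d + 1 + 1)).eval t *
            ((partitionPoly p (d + 1)).eval t * ‖1 - z ^ (p - 1)‖) := by ring
      _ ≤ (partitionPoly p (d + 1 + 1)).eval t *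
            (‖aeval z (partitionPoly p (d + 1))‖ * (1 - t ^ (p - 1))) :=
          mul_le_mul_of_nonneg_left (ih hpos') (hpos t ⟨ht0, le_rfl⟩).le
      _ = (partitionPoly p (d + 1 + 1)).eval t * ‖aeval z (partitionPoly p (d + 1))‖ *
            (1 - t ^ (p - 1)) := by ring
      _ ≤ ‖aeval z (partitionPoly p (d + 1 + 1))‖ * (partitionPoly p (d + 1)).eval t *
            (1 - t ^ (p - 1)) :=
          mul_le_mul_of_nonneg_right
            (eval_partitionPoly_succ_mul_norm_le hp ht0 ht1 hpos hz hzt.le) hτ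
      _ = ‖aeval z (partitionPoly p (d + 1 + 1))‖ * (1 - t ^ (p - 1)) *
            (partitionPoly p (d + 1)).eval t := by ring

theorem eval_partitionPoly_le_norm_aeval_circleMap_mul_exp (hp : 2 ≤ p) (hd : d ≠ 0) (ht0 : 0 < t)
    (ht1 : t < 1) (hpos : ∀ x ∈ Set.Ioc 0 t, 0 < (partitionPoly p d).eval x) {θ : ℝ}
    (hθ : |θ| ≤ Real.pi / (p - 1 : ℕ)) :
    (partitionPoly p d).eval t ≤ ‖aeval (circleMap 0 t θ) (partitionPoly p d)‖ *
      Real.exp (-(t ^ (p - 1) * (p - 1 : ℕ) ^ 2 / (2 * Real.pi ^ 2)) * θ ^ 2) := by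
  obtain ⟨d, rfl⟩ := Nat.exists_eq_succ_of_ne_zero hd
  set z := circleMap 0 t θ with hz
  have hr : (0 : ℝ) < (p - 1 : ℕ) := Nat.cast_pos.2 (by omega)
  have hzpow : z ^ (p - 1) = ((t ^ (p - 1) : ℝ) : ℂ) *
      Complex.exp ((((p - 1 : ℕ) * θ : ℝ) : ℂ) * Complex.I) := by
    rw [hz, circleMap_zero, mul_pow, ← Complex.exp_nat_mul]
    push_cast
    rw [mul_assoc ((p - 1 : ℕ) : ℂ)]
  have hangle : |(p - 1 : ℕ) * θ| ≤ Real.pi := by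
    rwa [abs_mul, abs_of_pos hr, ← le_div_iff₀' hr]
  have hnorm := one_sub_le_norm_one_sub_mul_exp (pow_nonneg ht0.le (p - 1))
    (pow_le_one₀ ht0.le ht1.le) hangle
  rw [← hzpow] at hnorm
  have hcircle := eval_partitionPoly_succ_mul_norm_one_sub_pow_le hp ht0 ht1 hpos
    (z := z) ((norm_circleMap_zero t θ).trans (abs_of_pos ht0))
  have hτ : 0 < 1 - t ^ (p - 1) := sub_pos.2 (pow_lt_one₀ ht0.le ht1 (by omega))
  rw [show -(t ^ (p - 1) * (p - 1 : ℕ) ^ 2 / (2 * Real.pi ^ 2)) * θ ^ 2 =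
    -(t ^ (p - 1) * ((p - 1 : ℕ) * θ) ^ 2 / (2 * Real.pi ^ 2)) by ring]
  set E := Real.exp (-(t ^ (p - 1) * ((p - 1 : ℕ) * θ) ^ 2 / (2 * Real.pi ^ 2)))
  refine le_of_mul_le_mul_right ?_ hτ
  calc (partitionPoly p (d + 1)).eval t * (1 - t ^ (p - 1))
      ≤ (partitionPoly p (d + 1)).eval t * (‖1 - z ^ (p - 1)‖ * E) :=
        mul_le_mul_of_nonneg_left hnorm (hpos t ⟨ht0, le_rfl⟩).le
    _ = (partitionPoly p (d + 1)).eval t * ‖1 - z ^ (p - 1)‖ * E := (mul_assoc _ _ _).symm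
    _ ≤ ‖aeval z (partitionPoly p (d + 1))‖ * (1 - t ^ (p - 1)) * E :=
        mul_le_mul_of_nonneg_right hcircle (Real.exp_nonneg _)
    _ = ‖aeval z (partitionPoly p (d + 1))‖ * E * (1 - t ^ (p - 1)) := mul_right_comm _ _ _

end PartitionPolynomial

section FirstCriticalPoint

open Polynomial

variable {f : ℝ[X]} {s : ℝ}

theorem lt_one_of_le_critical_points (h0 : f.eval 0 = 0) (h1 : f.eval 1 = 0)
    (hmin : ∀ x, 0 < x → (derivative f).eval x = 0 → s ≤ x) : s < 1 := by
  obtain ⟨x, hx, hx0⟩ :=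
    exists_deriv_eq_zero one_pos f.continuous.continuousOn (h0.trans h1.symm)
  exact (hmin x hx.1 (f.deriv.symm.trans hx0)).trans_lt hx.2

theorem derivative_eval_pos_of_le_critical_points (h1 : 0 < (derivative f).eval 0)
    (hmin : ∀ x, 0 < x → (derivative f).eval x = 0 → s ≤ x) {x : ℝ} (hx0 : 0 < x) (hxs : x < s) :
    0 < (derivative f).eval x := by
  by_contra! hneg
  obtain ⟨c, hc, hc0⟩ := intermediate_value_Icc' hx0.le (derivative f).continuous.continuousOn
    ⟨hneg, h1.le⟩
  have hcpos : 0 < c := hc.1.lt_of_ne (by rintro rfl; exact h1.ne' hc0)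
  exact ((hmin c hcpos hc0).trans hc.2).not_gt hxs

theorem eval_pos_of_le_critical_points (h0 : f.eval 0 = 0) (h1 : 0 < (derivative f).eval 0)
    (hmin : ∀ x, 0 < x → (derivative f).eval x = 0 → s ≤ x) :
    ∀ x ∈ Set.Ioc 0 s, 0 < f.eval x := by
  intro x hx
  have hmono : StrictMonoOn (fun x => f.eval x) (Set.Icc 0 s) := by
    refine strictMonoOn_of_deriv_pos (convex_Icc 0 s) f.continuous.continuousOn fun u hu => ?_
    rw [interior_Icc] at hu
    rw [f.deriv]
    exact derivative_eval_pos_of_le_critical_points h1 hmin hu.1 hu.2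
  simpa only [h0] using
    hmono (Set.left_mem_Icc.2 (hx.1.le.trans hx.2)) (Set.Ioc_subset_Icc_self hx) hx.1

end FirstCriticalPoint

/-- Fix `d ≥ 1` and `p ≥ 2`, let `q(z) = ∑_{k=0}^{d} (-1)^k C(d,k) z^{p^k}`,
and let `s > 0` be the smallest positive real with `q'(s) = 0`.  Then, as `n → ∞` along the
arithmetic progression `n ≡ 1 (mod p-1)` (i.e. `n = m(p-1)+1` with `m → ∞`),
`C_{d,p}(n) ∼ (p-1)/√(-2π q''(s)) ⬝ n^{-3/2} ⬝ q(s)^{1/2 - n}`; that is, the ratio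
`C_{d,p}(n) ⬝ n^{3/2} ⬝ q(s)^{n - 1/2} ⬝ √(-2π q''(s)) / (p-1)` tends to `1`.  Here
`C_{d,p}(n)` is the coefficient of `x^n` in the unique power series `y ∈ ℚ⟦x⟧` with zero
constant term satisfying `∑_{k=0}^{d} (-1)^k C(d,k) y^{p^k} = x`. -/
theorem statement_9 (d p : ℕ) (hd : 1 ≤ d) (hp : 2 ≤ p)
    (y : PowerSeries ℚ)
    (h0 : PowerSeries.constantCoeff y = 0)
    (heq : ∑ k ∈ Finset.range (d + 1),
        (-1 : PowerSeries ℚ) ^ k * (d.choose k : PowerSeries ℚ) * y ^ p ^ k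
        = PowerSeries.X)
    (q : ℝ → ℝ)
    (hq : ∀ z : ℝ, q z =
        ∑ k ∈ Finset.range (d + 1), (-1 : ℝ) ^ k * (d.choose k : ℝ) * z ^ p ^ k)
    (s : ℝ) (hs : 0 < s) (hcrit : deriv q s = 0)
    (hmin : ∀ t : ℝ, 0 < t → deriv q t = 0 → s ≤ t) :
    Tendsto
      (fun m : ℕ =>
        ((PowerSeries.coeff (m * (p - 1) + 1) y : ℚ) : ℝ) *
          ((m * (p - 1) + 1 : ℕ) : ℝ) ^ ((3 : ℝ) / 2) *
          q s ^ (((m * (p - 1) + 1 : ℕ) : ℝ) - 1 / 2) *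
          Real.sqrt (-(2 * Real.pi * deriv (deriv q) s)) / ((p : ℝ) - 1))
      atTop (nhds 1) := by
  let f := partitionPoly p d
  have hp0 : p ≠ 0 := by omega
  have hd0 : d ≠ 0 := by omega
  obtain rfl : q = fun z => f.eval z :=
    funext fun z => by simp [hq, f, partitionPoly, Polynomial.eval_finsetSum]
  have hderiv (g : Polynomial ℝ) : deriv (fun z => g.eval z) = fun z => g.derivative.eval z :=
    funext fun _ => g.deriv
  simp only [hderiv] at hcrit hmin ⊢
  have hs1 : s < 1 := lt_one_of_le_critical_points (eval_partitionPoly_zero_right hp0)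
    (eval_partitionPoly_one hd0) hmin
  have hpos : ∀ x ∈ Set.Ioc 0 s, 0 < f.eval x := eval_pos_of_le_critical_points
    (eval_partitionPoly_zero_right hp0) (derivative_partitionPoly_eval_zero hp ▸ one_pos) hmin
  have hy : Polynomial.aeval (PowerSeries.map (algebraMap ℚ ℝ) y) f = PowerSeries.X := by
    simpa [f, partitionPoly] using congrArg (PowerSeries.map (algebraMap ℚ ℝ)) heq
  obtain ⟨hne, -⟩ :=
    aeval_partitionPoly_ne_zero_and_partitionRatio_mem_natSeriesOn hp hs hs1 hpos
  have hr : 0 < p - 1 := by omega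
  have hmain := tendsto_coeff_mul_rpow_of_norm_aeval_circleMap_le (r := p - 1) hs
    (constantCoeff_map_eq_zero _ h0) hy hcrit
    (hpos s ⟨hs, le_rfl⟩) hne hr.ne'
    (fun w z hw => aeval_partitionPoly_mul hp0 hw z) (by positivity)
    fun θ hθ => eval_partitionPoly_le_norm_aeval_circleMap_mul_exp hp hd0 hs hs1 hpos hθ
  simpa [f, Nat.cast_sub (by omega : 1 ≤ p)] using hmain
end
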